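/- arXiv:2109.06369 — 3 statements merged into one kernel-verified Lean document; each statement's English description precedes it below -/
import Mathlib

section
/- Every totally positive matrix has a unique L-scaffolding: if X is an m×n totally positive real matrix, then there exists exactly one positive m×n real matrix T with X_L(T) = X. -/
/-!
The rows are peeled off one at a time. An L-path visits its rows in decreasing order, so it meets
the first row, if at all, only in its last turn. Hence, with `T'` denoting `T` without its first
row, the first row of `X_L(T)` is the first row of `T`, and the remaining rows form `X_L(T') * U`
with `U` unipotent upper triangular, `U_{j'j} = t_{0j'}⁻¹ t_{0j}` (`XL_zero`, `XL_succ`).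
The inverse of `U` is bidiagonal (`cumulative_iff`): multiplication by it is one sweep of Neville
elimination, which subtracts from each column the multiple of its left neighbour that kills the
first-row entry. So `X_L(T) = X` holds exactly when `T` and `X` share their first row and
`X_L(T') = neville X` (`XL_eq_iff`), and both existence and uniqueness follow by induction on the
number of rows, provided positivity survives the elimination.

Total positivity enters only through the minors on consecutive columns with arbitrary rows
(`ColContigPos`). These stay positive (`ColContigPos.neville`): such a minor of `neville X` is the
same minor of `X` if it starts in the first column, and otherwise it is the minor of `X` bordered
by the first row and the preceding column, divided by a positive entry of the first row.
-/

open Finset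

/-- A real matrix is totally positive if every minor (determinant of a square submatrix
obtained by selecting rows and columns in increasing order) is positive. -/
def TotallyPositive {m n : ℕ} (A : Matrix (Fin m) (Fin n) ℝ) : Prop :=
  ∀ (r : ℕ) (f : Fin r → Fin m) (g : Fin r → Fin n),
    StrictMono f → StrictMono g → 0 < (A.submatrix f g).det

/-- A matrix is (strongly) positive if all of its entries are positive. -/
def EntrywisePos {m n : ℕ} (A : Matrix (Fin m) (Fin n) ℝ) : Prop :=
  ∀ i j, 0 < A i j

/-- The weight of the Γ-path encoded by the pair of finsets `(I, J)`.
A Γ-path with Γ-turns `(i₁,j₁), …, (i_p,j_p)`, where `i₁ < i₂ < ⋯ < i_p` and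
`j₁ > j₂ > ⋯ > j_p`, corresponds to the pair `I = {i₁,…,i_p}`, `J = {j₁,…,j_p}`;
the path runs from row vertex `i₁ = min I` to column vertex `j_p = min J`.
Its weight is `t_{i₁j₁} · ∏_{s=1}^{p−1} t_{i_{s+1} j_s}⁻¹ · t_{i_{s+1} j_{s+1}}`. -/
noncomputable def gammaWeight {m n : ℕ} (T : Matrix (Fin m) (Fin n) ℝ)
    (I : Finset (Fin m)) (J : Finset (Fin n)) : ℝ :=
  if h : I.Nonempty ∧ J.Nonempty ∧ I.card = J.card then
    let p := I.card
    let row : ℕ → Fin m := fun s => (I.sort (· ≤ ·)).getD s (I.min' h.1)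
    let col : ℕ → Fin n := fun s => (J.sort (· ≤ ·)).getD (p - 1 - s) (J.min' h.2.1)
    T (row 0) (col 0) *
      ∏ s ∈ Finset.range (p - 1),
        ((T (row (s + 1)) (col s))⁻¹ * T (row (s + 1)) (col (s + 1)))
  else 0

/-- The Γ-path-sum matrix `X_Γ(T)`: its `(i,j)` entry is the sum of the weights of all
Γ-paths from row vertex `i` to column vertex `j`. -/
noncomputable def XGamma {m n : ℕ} (T : Matrix (Fin m) (Fin n) ℝ) :
    Matrix (Fin m) (Fin n) ℝ :=
  Matrix.of fun i j =>
    ∑ I ∈ Finset.univ.filter (fun I : Finset (Fin m) => I.min = (i : WithTop (Fin m))),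
      ∑ J ∈ Finset.univ.filter (fun J : Finset (Fin n) =>
          J.min = (j : WithTop (Fin n)) ∧ J.card = I.card),
        gammaWeight T I J

/-- The weight of the L-path encoded by the pair of finsets `(I, J)`.
An L-path with turns `(i₁,j₁), …, (i_p,j_p)`, where `i₁ > i₂ > ⋯ > i_p` and
`j₁ < j₂ < ⋯ < j_p`, corresponds to `I = {i₁,…,i_p}`, `J = {j₁,…,j_p}`;
the path runs from row vertex `i₁ = max I` to column vertex `j_p = max J`. -/
noncomputable def lWeight {m n : ℕ} (T : Matrix (Fin m) (Fin n) ℝ)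
    (I : Finset (Fin m)) (J : Finset (Fin n)) : ℝ :=
  if h : I.Nonempty ∧ J.Nonempty ∧ I.card = J.card then
    let p := I.card
    let row : ℕ → Fin m := fun s => (I.sort (· ≤ ·)).getD (p - 1 - s) (I.min' h.1)
    let col : ℕ → Fin n := fun s => (J.sort (· ≤ ·)).getD s (J.min' h.2.1)
    T (row 0) (col 0) *
      ∏ s ∈ Finset.range (p - 1),
        ((T (row (s + 1)) (col s))⁻¹ * T (row (s + 1)) (col (s + 1)))
  else 0

/-- The L-path-sum matrix `X_L(T)`. -/
noncomputable def XL {m n : ℕ} (T : Matrix (Fin m) (Fin n) ℝ) :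
    Matrix (Fin m) (Fin n) ℝ :=
  Matrix.of fun i j =>
    ∑ I ∈ Finset.univ.filter (fun I : Finset (Fin m) => I.max = (i : WithBot (Fin m))),
      ∑ J ∈ Finset.univ.filter (fun J : Finset (Fin n) =>
          J.max = (j : WithBot (Fin n)) ∧ J.card = I.card),
        lWeight T I J

/-- The set of internal vertices traversed by the Γ-path encoded by `(I, J)`:
horizontal segments `{(i_s, b) : j_s ≤ b ≤ j_{s-1}}` (with `j₀` interpreted as the last
column) and vertical segments `{(a, j_s) : i_s ≤ a ≤ i_{s+1}}` (with `i_{p+1}` interpreted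
as the last row). -/
def pathVerts {m n : ℕ} (I : Finset (Fin m)) (J : Finset (Fin n)) :
    Finset (Fin m × Fin n) :=
  Finset.univ.filter fun v =>
    (∃ s ∈ Finset.range I.card,
        v.1 = (I.sort (· ≤ ·)).getD s v.1 ∧
        (J.sort (· ≤ ·)).getD (J.card - 1 - s) v.2 ≤ v.2 ∧
        (s = 0 ∨ v.2 ≤ (J.sort (· ≤ ·)).getD (J.card - s) v.2)) ∨
    (∃ s ∈ Finset.range I.card,
        v.2 = (J.sort (· ≤ ·)).getD (J.card - 1 - s) v.2 ∧
        (I.sort (· ≤ ·)).getD s v.1 ≤ v.1 ∧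
        (s + 1 = I.card ∨ v.1 ≤ (I.sort (· ≤ ·)).getD (s + 1) v.1))

/-- The sequence of matrices produced by Cauchon's Algorithm: `cauchonSeq X t` is the
matrix obtained after performing the first `t` steps, the steps being indexed by the
positions `(i,j) ∈ [m]×[n]` (1-based) in increasing reverse lexicographic order
(`(m,n)` first); the step at 1-based position `(i,j)` is performed on `cauchonSeq X t`
with `t = (m−i)·n + (n−j)`, so that the matrix `X^{(i,j)}` of Cauchon's Algorithm is
`cauchonSeq X ((m−i)·n + (n−j))`. -/
noncomputable def cauchonSeq {m n : ℕ} (X : Matrix (Fin m) (Fin n) ℝ) :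
    ℕ → Matrix (Fin m) (Fin n) ℝ
  | 0 => X
  | t + 1 =>
    let Y := cauchonSeq X t
    Matrix.of fun k l =>
      let i0 : Fin m := ⟨m - 1 - t / n,
        lt_of_le_of_lt (Nat.sub_le _ _) (by have := k.isLt; omega)⟩
      let j0 : Fin n := ⟨n - 1 - t % n,
        lt_of_le_of_lt (Nat.sub_le _ _) (by have := l.isLt; omega)⟩
      if (k : ℕ) < (i0 : ℕ) ∧ (l : ℕ) < (j0 : ℕ) then
        Y k l - Y k j0 * (Y i0 j0)⁻¹ * Y i0 l
      else Y k l

/-- The output `T = X^{(1,1)}` of Cauchon's Algorithm. -/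
noncomputable def cauchonOutput {m n : ℕ} (X : Matrix (Fin m) (Fin n) ℝ) :
    Matrix (Fin m) (Fin n) ℝ :=
  cauchonSeq X ((m - 1) * n + (n - 1))

/-- `contigMinorTL A i j` (1-based `i`, `j`) is the minor `det A[{i⋯},{j⋯}]` of the
largest contiguous submatrix of `A` with top-left corner `(i,j)`, i.e. with rows
`i, …, i+k` and columns `j, …, j+k` where `k = min(M−i, N−j)`; it is `1` (the empty
determinant) if `(i,j)` is out of range. -/
noncomputable def contigMinorTL {M N : ℕ} (A : Matrix (Fin M) (Fin N) ℝ) (i j : ℕ) : ℝ :=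
  if h : 1 ≤ i ∧ i ≤ M ∧ 1 ≤ j ∧ j ≤ N then
    (A.submatrix
      (fun s : Fin (min (M - i) (N - j) + 1) =>
        (⟨i - 1 + (s : ℕ), by have := s.isLt; omega⟩ : Fin M))
      (fun s : Fin (min (M - i) (N - j) + 1) =>
        (⟨j - 1 + (s : ℕ), by have := s.isLt; omega⟩ : Fin N))).det
  else 1

/-- `borderMinorTL A i₀ j₀ i j` (1-based indices, `i₀ < i`, `j₀ < j`) is the minor
`det A[{i₀, i⋯},{j₀, j⋯}]` with rows `{i₀} ∪ {i, …, i+k}` and columns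
`{j₀} ∪ {j, …, j+k}` where `k = min(M−i, N−j)`; when the contiguous part is out of range
(`i > M` or `j > N`) it is the single entry `A[{i₀},{j₀}]`, and it is `1` if `(i₀,j₀)`
is out of range. -/
noncomputable def borderMinorTL {M N : ℕ} (A : Matrix (Fin M) (Fin N) ℝ)
    (i₀ j₀ i j : ℕ) : ℝ :=
  if h : 1 ≤ i₀ ∧ i₀ ≤ M ∧ 1 ≤ j₀ ∧ j₀ ≤ N then
    if h2 : i₀ < i ∧ i ≤ M ∧ j₀ < j ∧ j ≤ N then
      (A.submatrix
        (fun s : Fin (min (M - i) (N - j) + 2) =>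
          if (s : ℕ) = 0 then (⟨i₀ - 1, by omega⟩ : Fin M)
          else ⟨i - 1 + ((s : ℕ) - 1), by have := s.isLt; omega⟩)
        (fun s : Fin (min (M - i) (N - j) + 2) =>
          if (s : ℕ) = 0 then (⟨j₀ - 1, by omega⟩ : Fin N)
          else ⟨j - 1 + ((s : ℕ) - 1), by have := s.isLt; omega⟩)).det
    else A ⟨i₀ - 1, by omega⟩ ⟨j₀ - 1, by omega⟩
  else 1

/-- `borderMinorBR A i j i₀ j₀` (1-based indices, `i < i₀`, `j < j₀`) is the minor
`det A[{⋯i, i₀},{⋯j, j₀}]` with rows `{i−k, …, i} ∪ {i₀}` and columns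
`{j−k, …, j} ∪ {j₀}` where `k = min(i−1, j−1)`; when the contiguous part is empty
(`i = 0` or `j = 0`) it is the single entry `A[{i₀},{j₀}]`, and it is `1` if `(i₀,j₀)`
is out of range. -/
noncomputable def borderMinorBR {M N : ℕ} (A : Matrix (Fin M) (Fin N) ℝ)
    (i j i₀ j₀ : ℕ) : ℝ :=
  if h : 1 ≤ i₀ ∧ i₀ ≤ M ∧ 1 ≤ j₀ ∧ j₀ ≤ N then
    if h2 : 1 ≤ i ∧ i < i₀ ∧ 1 ≤ j ∧ j < j₀ then
      (A.submatrix
        (fun s : Fin (min (i - 1) (j - 1) + 2) =>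
          if (s : ℕ) = min (i - 1) (j - 1) + 1 then (⟨i₀ - 1, by omega⟩ : Fin M)
          else ⟨i - 1 - min (i - 1) (j - 1) + (s : ℕ), by have := s.isLt; omega⟩)
        (fun s : Fin (min (i - 1) (j - 1) + 2) =>
          if (s : ℕ) = min (i - 1) (j - 1) + 1 then (⟨j₀ - 1, by omega⟩ : Fin N)
          else ⟨j - 1 - min (i - 1) (j - 1) + (s : ℕ), by have := s.isLt; omega⟩)).det
    else A ⟨i₀ - 1, by omega⟩ ⟨j₀ - 1, by omega⟩
  else 1

/-! ### Weights of L-paths -/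

/-- The weight of an L-path read off from the increasing lists `a` of its rows and `b` of its
columns, with arbitrary default values `d`, `e` outside the range of the lists. -/
noncomputable def listWeight {m n : ℕ} (T : Matrix (Fin m) (Fin n) ℝ)
    (a : List (Fin m)) (b : List (Fin n)) (d : Fin m) (e : Fin n) : ℝ :=
  T (a.getD (a.length - 1) d) (b.getD 0 e) *
    ∏ s ∈ Finset.range (a.length - 1),
      ((T (a.getD (a.length - 1 - (s + 1)) d) (b.getD s e))⁻¹ *
        T (a.getD (a.length - 1 - (s + 1)) d) (b.getD (s + 1) e))

lemma getD_congr_default {α : Type*} (l : List α) (k : ℕ) (d e : α) (h : k < l.length) :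
    l.getD k d = l.getD k e := by
  rw [List.getD_eq_getElem _ _ h, List.getD_eq_getElem _ _ h]

lemma lWeight_eq_listWeight {m n : ℕ} (T : Matrix (Fin m) (Fin n) ℝ)
    (I : Finset (Fin m)) (J : Finset (Fin n)) (d : Fin m) (e : Fin n)
    (hI : I.Nonempty) (hIJ : I.card = J.card) :
    lWeight T I J = listWeight T (I.sort (· ≤ ·)) (J.sort (· ≤ ·)) d e := by
  have hp : 0 < I.card := hI.card_pos
  have hJ : J.Nonempty := Finset.card_pos.mp (hIJ ▸ hp)
  have hrow : ∀ k < I.card, ∀ x, (I.sort (· ≤ ·)).getD k x = (I.sort (· ≤ ·)).getD k d :=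
    fun k hk x => getD_congr_default _ _ _ _ (by simpa using hk)
  have hcol : ∀ k < I.card, ∀ x, (J.sort (· ≤ ·)).getD k x = (J.sort (· ≤ ·)).getD k e :=
    fun k hk x => getD_congr_default _ _ _ _ (by simpa [← hIJ] using hk)
  unfold lWeight listWeight
  rw [dif_pos ⟨hI, hJ, hIJ⟩]
  simp only [Finset.length_sort, Nat.sub_zero]
  rw [hrow _ (by omega), hcol _ hp]
  congr 1
  refine Finset.prod_congr rfl fun s hs => ?_
  have hs' := Finset.mem_range.mp hs
  rw [hrow _ (by omega), hcol s (by omega), hcol (s + 1) (by omega)]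

lemma sort_map_succ {m : ℕ} (I : Finset (Fin m)) :
    (I.map (Fin.succEmb m)).sort (· ≤ ·) = (I.sort (· ≤ ·)).map Fin.succ := by
  symm
  refine List.Perm.eq_of_pairwise' (r := (· ≤ ·)) ?_ (Finset.pairwise_sort _ _) ?_
  · rw [List.pairwise_map]
    exact (Finset.pairwise_sort I (· ≤ ·)).imp fun h => Fin.succ_le_succ_iff.mpr h
  · rw [List.perm_ext_iff_of_nodup
      ((Finset.sort_nodup _ _).map (Fin.succ_injective m)) (Finset.sort_nodup _ _)]
    intro x
    simp

lemma sort_insert_zero {m : ℕ} (I : Finset (Fin m)) :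
    (insert 0 (I.map (Fin.succEmb m))).sort (· ≤ ·) =
      0 :: (I.sort (· ≤ ·)).map Fin.succ := by
  rw [Finset.sort_insert, sort_map_succ]
  · intro x _; exact Fin.zero_le x
  · simp

lemma sort_insert_top {n : ℕ} (J : Finset (Fin n)) (j : Fin n) (h : ∀ x ∈ J, x < j) :
    (insert j J).sort (· ≤ ·) = J.sort (· ≤ ·) ++ [j] := by
  symm
  have hj : j ∉ J := fun hj => lt_irrefl _ (h j hj)
  refine List.Perm.eq_of_pairwise' (r := (· ≤ ·)) ?_ (Finset.pairwise_sort _ _) ?_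
  · rw [List.pairwise_append]
    refine ⟨Finset.pairwise_sort _ _, by simp, ?_⟩
    intro a ha b hb
    simp only [List.mem_singleton] at hb
    subst hb
    exact (h a (by simpa using ha)).le
  · rw [List.perm_ext_iff_of_nodup _ (Finset.sort_nodup _ _)]
    · intro x
      simp [or_comm]
    · rw [List.nodup_append]
      refine ⟨Finset.sort_nodup _ _, by simp, ?_⟩
      intro a ha b hb
      simp only [List.mem_singleton] at hb
      subst hb
      exact (h a (by simpa using ha)).ne

lemma lWeight_singleton {m n : ℕ} (T : Matrix (Fin m) (Fin n) ℝ) (i : Fin m) (j : Fin n) :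
    lWeight T {i} {j} = T i j := by
  rw [lWeight_eq_listWeight T {i} {j} i j (by simp) (by simp)]
  simp [listWeight]

/-- Paths avoiding the first row are paths of the matrix with its first row removed. -/
lemma lWeight_map_succ {m n : ℕ} (T : Matrix (Fin (m + 1)) (Fin n) ℝ)
    (I : Finset (Fin m)) (J : Finset (Fin n)) (hI : I.Nonempty) (hIJ : I.card = J.card) :
    lWeight T (I.map (Fin.succEmb m)) J = lWeight (T.submatrix Fin.succ id) I J := by
  obtain ⟨d, hd⟩ := hI
  have hJ : J.Nonempty := Finset.card_pos.mp (hIJ ▸ Finset.card_pos.mpr ⟨d, hd⟩)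
  obtain ⟨e, he⟩ := hJ
  rw [lWeight_eq_listWeight _ I J d e ⟨d, hd⟩ hIJ,
    lWeight_eq_listWeight _ _ J d.succ e (by simpa using ⟨d, hd⟩) (by simpa using hIJ),
    sort_map_succ]
  simp [listWeight]

/-- A path whose last turn is at `(0, j)` is a path in the remaining rows, ending at some column
`j' < j`, followed by the step with factor `t_{0j'}⁻¹ t_{0j}`. -/
lemma lWeight_insert {m n : ℕ} (T : Matrix (Fin (m + 1)) (Fin n) ℝ)
    (I : Finset (Fin m)) (J : Finset (Fin n)) (j' j : Fin n) (hI : I.Nonempty)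
    (hIJ : I.card = J.card) (hj' : J.max = (j' : WithBot (Fin n))) (hj : j' < j) :
    lWeight T (insert 0 (I.map (Fin.succEmb m))) (insert j J) =
      lWeight (T.submatrix Fin.succ id) I J * (T 0 j')⁻¹ * T 0 j := by
  have hp : 0 < I.card := hI.card_pos
  have hJ : J.Nonempty := Finset.card_pos.mp (hIJ ▸ hp)
  obtain ⟨d, hd⟩ := hI
  have hlt : ∀ x ∈ J, x < j := fun x hx => lt_of_le_of_lt (Finset.le_max_of_eq hx hj') hj
  have hjJ : j ∉ J := fun h => lt_irrefl _ (hlt j h)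
  have hcard : (insert 0 (I.map (Fin.succEmb m))).card = (insert j J).card := by
    rw [Finset.card_insert_of_notMem (by simp), Finset.card_insert_of_notMem hjJ]
    simpa using hIJ
  rw [lWeight_eq_listWeight _ I J d j ⟨d, hd⟩ hIJ,
    lWeight_eq_listWeight _ _ _ d.succ j (by simp) hcard, sort_insert_zero,
    sort_insert_top J j hlt]
  obtain ⟨p, hpI⟩ : ∃ p, I.card = p + 1 := ⟨I.card - 1, by omega⟩
  have hla : (I.sort (· ≤ ·)).length = p + 1 := by simpa using hpI
  have hlb : (J.sort (· ≤ ·)).length = p + 1 := by rw [Finset.length_sort, ← hIJ, hpI]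
  have hlast : (J.sort (· ≤ ·)).getD p j = j' := by
    have h1 := Finset.sorted_last_eq_max'_aux J (by rw [hlb]; omega) hJ
    rw [List.getD_eq_getElem _ _ (by omega)]
    have h2 : J.max' hJ = j' := by
      have := Finset.coe_max' hJ
      rw [hj'] at this
      exact_mod_cast this
    rw [← h2, ← h1]
    simp [hlb]
  generalize I.sort (· ≤ ·) = a at hla
  generalize J.sort (· ≤ ·) = b at hlb hlast
  unfold listWeight
  have hb : ∀ k < p + 1, (b ++ [j]).getD k j = b.getD k j := fun k hk =>
    List.getD_append _ _ _ _ (by omega)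
  have hbl : (b ++ [j]).getD (p + 1) j = j := by
    rw [List.getD_append_right _ _ _ _ (by omega)]; simp [hlb]
  simp only [List.length_cons, List.length_map, hla, Nat.add_sub_cancel]
  rw [Finset.prod_range_succ, hb 0 (by omega), hb p (by omega), hbl, hlast]
  have hprod : ∀ s ∈ Finset.range p,
      (T ((0 :: a.map Fin.succ).getD (p + 1 - (s + 1)) d.succ) ((b ++ [j]).getD s j))⁻¹ *
        T ((0 :: a.map Fin.succ).getD (p + 1 - (s + 1)) d.succ) ((b ++ [j]).getD (s + 1) j) =
      (T.submatrix Fin.succ id (a.getD (p - (s + 1)) d) (b.getD s j))⁻¹ *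
        T.submatrix Fin.succ id (a.getD (p - (s + 1)) d) (b.getD (s + 1) j) := by
    intro s hs
    have hs' := Finset.mem_range.mp hs
    rw [hb s (by omega), hb (s + 1) (by omega),
      show p + 1 - (s + 1) = (p - (s + 1)) + 1 by omega]
    simp
  rw [Finset.prod_congr rfl hprod]
  simp only [List.getD_cons_succ, List.getD_map, Matrix.submatrix_apply, id, Nat.sub_self,
    List.getD_cons_zero]
  ring

/-! ### Peeling off the first row of the path-sum matrix -/

lemma max_eq_coe_iff {k : ℕ} (I : Finset (Fin k)) (i : Fin k) :
    I.max = (i : WithBot (Fin k)) ↔ i ∈ I ∧ ∀ x ∈ I, x ≤ i :=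
  ⟨fun h => ⟨Finset.mem_of_max h, fun _ hx => Finset.le_max_of_eq hx h⟩, fun ⟨h1, h2⟩ =>
    le_antisymm (Finset.max_le fun x hx => WithBot.coe_le_coe.mpr (h2 x hx)) (Finset.le_max h1)⟩

lemma XL_zero {m n : ℕ} (T : Matrix (Fin (m + 1)) (Fin n) ℝ) (j : Fin n) :
    XL T 0 j = T 0 j := by
  have hI : Finset.univ.filter (fun I : Finset (Fin (m + 1)) =>
      I.max = ((0 : Fin (m + 1)) : WithBot (Fin (m + 1)))) = {{0}} := by
    ext I
    simp only [Finset.mem_filter, Finset.mem_univ, true_and, Finset.mem_singleton, max_eq_coe_iff]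
    constructor
    · rintro ⟨h1, h2⟩
      exact Finset.eq_singleton_iff_unique_mem.mpr ⟨h1, fun x hx => Fin.le_zero_iff.mp (h2 x hx)⟩
    · rintro rfl; simp
  have hJ : Finset.univ.filter (fun J : Finset (Fin n) =>
      J.max = (j : WithBot (Fin n)) ∧ J.card = ({0} : Finset (Fin (m + 1))).card) = {{j}} := by
    ext J
    simp only [Finset.mem_filter, Finset.mem_univ, true_and, Finset.mem_singleton,
      Finset.card_singleton, Finset.card_eq_one]
    constructor
    · rintro ⟨h1, x, rfl⟩
      rw [Finset.max_singleton] at h1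
      rw [WithBot.coe_injective h1]
    · rintro rfl; exact ⟨Finset.max_singleton, j, rfl⟩
  simp only [XL, Matrix.of_apply]
  rw [hI, Finset.sum_singleton, hJ, Finset.sum_singleton, lWeight_singleton]

/-- Sorting row sets by whether they contain the first row. -/
lemma sum_max_succ {m : ℕ} (i : Fin m) (F : Finset (Fin (m + 1)) → ℝ) :
    ∑ I ∈ Finset.univ.filter (fun I : Finset (Fin (m + 1)) =>
        I.max = (i.succ : WithBot (Fin (m + 1)))), F I =
      ∑ I ∈ Finset.univ.filter (fun I : Finset (Fin m) => I.max = (i : WithBot (Fin m))),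
        (F (I.map (Fin.succEmb m)) + F (insert 0 (I.map (Fin.succEmb m)))) := by
  rw [Finset.sum_add_distrib, ← Finset.sum_filter_not_add_sum_filter _ (fun I => 0 ∈ I)]
  have key : ∀ I : Finset (Fin (m + 1)), (Finset.univ.filter fun x : Fin m => x.succ ∈ I).map
      (Fin.succEmb m) = I.erase 0 := by
    intro I
    ext x
    refine Fin.cases ?_ (fun y => ?_) x
    · simp
    · simp
  have key2 : ∀ I : Finset (Fin m), (Finset.univ.filter fun x : Fin m => x.succ ∈
      I.map (Fin.succEmb m)) = I := by
    intro I; ext x; simp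
  have key3 : ∀ I : Finset (Fin m), (Finset.univ.filter fun x : Fin m => x.succ ∈
      insert 0 (I.map (Fin.succEmb m))) = I := by
    intro I; ext x; simp
  congr 1
  · refine Finset.sum_nbij' (fun I => Finset.univ.filter fun x : Fin m => x.succ ∈ I)
      (fun I => I.map (Fin.succEmb m)) ?_ ?_ ?_ ?_ ?_
    · intro I hI
      simp only [Finset.mem_filter, Finset.mem_univ, true_and, max_eq_coe_iff] at hI ⊢
      exact ⟨hI.1.1, fun x hx => Fin.succ_le_succ_iff.mp (hI.1.2 _ hx)⟩
    · intro I hI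
      simp only [Finset.mem_filter, Finset.mem_univ, true_and, max_eq_coe_iff] at hI ⊢
      simpa using hI
    · intro I hI
      simp only [Finset.mem_filter] at hI
      simp only [key, Finset.erase_eq_of_notMem hI.2]
    · intro I _; exact key2 I
    · intro I hI
      simp only [Finset.mem_filter] at hI
      simp only [key, Finset.erase_eq_of_notMem hI.2]
  · refine Finset.sum_nbij' (fun I => Finset.univ.filter fun x : Fin m => x.succ ∈ I)
      (fun I => insert 0 (I.map (Fin.succEmb m))) ?_ ?_ ?_ ?_ ?_
    · intro I hI
      simp only [Finset.mem_filter, Finset.mem_univ, true_and, max_eq_coe_iff] at hI ⊢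
      exact ⟨hI.1.1, fun x hx => Fin.succ_le_succ_iff.mp (hI.1.2 _ hx)⟩
    · intro I hI
      simp only [Finset.mem_filter, Finset.mem_univ, true_and, max_eq_coe_iff] at hI ⊢
      simpa using hI
    · intro I hI
      simp only [Finset.mem_filter] at hI
      simp only [key, Finset.insert_erase hI.2]
    · intro I _; exact key3 I
    · intro I hI
      simp only [Finset.mem_filter] at hI
      simp only [key, Finset.insert_erase hI.2]

/-- Sorting column sets with largest element `j` by their second largest element. -/
lemma sum_max_card_succ {n : ℕ} (j : Fin n) (p : ℕ) (hp : 0 < p) (F : Finset (Fin n) → ℝ) :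
    ∑ J ∈ Finset.univ.filter (fun J : Finset (Fin n) =>
        J.max = (j : WithBot (Fin n)) ∧ J.card = p + 1), F J =
      ∑ j' ∈ Finset.Iio j, ∑ J ∈ Finset.univ.filter (fun J : Finset (Fin n) =>
        J.max = (j' : WithBot (Fin n)) ∧ J.card = p), F (insert j J) := by
  rw [Finset.sum_sigma']
  symm
  refine Finset.sum_bij (fun x _ => insert j x.2) ?_ ?_ ?_ ?_
  · rintro ⟨j', J⟩ h
    simp only [Finset.mem_sigma, Finset.mem_Iio, Finset.mem_filter, Finset.mem_univ, true_and,
      max_eq_coe_iff] at h ⊢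
    obtain ⟨h1, ⟨h2, h3⟩, h4⟩ := h
    have hjJ : j ∉ J := fun hj => absurd (h3 j hj) (not_le.mpr h1)
    refine ⟨⟨by simp, ?_⟩, by rw [Finset.card_insert_of_notMem hjJ, h4]⟩
    intro x hx
    rcases Finset.mem_insert.mp hx with rfl | hx
    · exact le_rfl
    · exact (h3 x hx).trans h1.le
  · rintro ⟨j₁, J₁⟩ h₁ ⟨j₂, J₂⟩ h₂ h
    simp only [Finset.mem_sigma, Finset.mem_Iio, Finset.mem_filter, Finset.mem_univ,
      true_and] at h₁ h₂ h
    have n₁ : j ∉ J₁ := fun hj =>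
      absurd (((max_eq_coe_iff _ _).mp h₁.2.1).2 j hj) (not_le.mpr h₁.1)
    have n₂ : j ∉ J₂ := fun hj =>
      absurd (((max_eq_coe_iff _ _).mp h₂.2.1).2 j hj) (not_le.mpr h₂.1)
    have hJ : J₁ = J₂ := by
      rw [← Finset.erase_insert n₁, ← Finset.erase_insert n₂, h]
    subst hJ
    have : j₁ = j₂ := WithBot.coe_injective (h₁.2.1.symm.trans h₂.2.1)
    subst this
    rfl
  · intro J hJ
    simp only [Finset.mem_filter, Finset.mem_univ, true_and] at hJ
    obtain ⟨hj, hle⟩ := (max_eq_coe_iff _ _).mp hJ.1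
    have hc : (J.erase j).card = p := by rw [Finset.card_erase_of_mem hj, hJ.2]; simp
    obtain ⟨j', hj'⟩ := Finset.max_of_nonempty (Finset.card_pos.mp (hc ▸ hp))
    refine ⟨⟨j', J.erase j⟩, ?_, Finset.insert_erase hj⟩
    simp only [Finset.mem_sigma, Finset.mem_Iio, Finset.mem_filter, Finset.mem_univ, true_and]
    have hm := Finset.mem_erase.mp (Finset.mem_of_max hj')
    exact ⟨lt_of_le_of_ne (hle _ hm.2) hm.1, hj', hc⟩
  · intro x _; rfl

/-- Removing the first row: `X_L(T)` without its first row is `X_L(T')` times the unipotent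
upper triangular matrix with entries `t_{0j'}⁻¹ t_{0j}`, where `T'` is `T` without its first
row. -/
lemma XL_succ {m n : ℕ} (T : Matrix (Fin (m + 1)) (Fin n) ℝ) (i : Fin m) (j : Fin n) :
    XL T i.succ j = XL (T.submatrix Fin.succ id) i j +
      (∑ j' ∈ Finset.Iio j, XL (T.submatrix Fin.succ id) i j' * (T 0 j')⁻¹) * T 0 j := by
  simp only [XL, Matrix.of_apply]
  rw [sum_max_succ, Finset.sum_add_distrib]
  congr 1
  · refine Finset.sum_congr rfl fun I hI => ?_
    simp only [Finset.mem_filter] at hI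
    simp only [Finset.card_map]
    refine Finset.sum_congr rfl fun J hJ => ?_
    simp only [Finset.mem_filter] at hJ
    exact lWeight_map_succ T I J ⟨i, Finset.mem_of_max hI.2⟩ hJ.2.2.symm
  · simp only [Finset.sum_mul]
    rw [Finset.sum_comm]
    refine Finset.sum_congr rfl fun I hI => ?_
    simp only [Finset.mem_filter] at hI
    have hne : I.Nonempty := ⟨i, Finset.mem_of_max hI.2⟩
    have hc : (insert 0 (I.map (Fin.succEmb m))).card = I.card + 1 := by
      rw [Finset.card_insert_of_notMem (by simp), Finset.card_map]
    rw [hc, sum_max_card_succ j I.card hne.card_pos]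
    refine Finset.sum_congr rfl fun j' hlt => Finset.sum_congr rfl fun J hJ => ?_
    simp only [Finset.mem_filter] at hJ
    exact lWeight_insert T I J j' j hne hJ.2.2.symm hJ.2.1 (Finset.mem_Iio.mp hlt)

/-! ### Neville elimination -/

/-- One sweep of Neville elimination: from each column of `X`, except the first, subtract the
multiple of the preceding column that kills the entry in the first row, then drop the first
row. -/
noncomputable def neville {m n : ℕ} (X : Matrix (Fin (m + 1)) (Fin (n + 1)) ℝ) :
    Matrix (Fin m) (Fin (n + 1)) ℝ :=
  Matrix.of fun i j => Fin.cases (X i.succ 0)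
    (fun k => X i.succ k.succ - X i.succ k.castSucc * (X 0 k.castSucc)⁻¹ * X 0 k.succ) j

lemma neville_zero {m n : ℕ} (X : Matrix (Fin (m + 1)) (Fin (n + 1)) ℝ) (i : Fin m) :
    neville X i 0 = X i.succ 0 := rfl

lemma neville_succ {m n : ℕ} (X : Matrix (Fin (m + 1)) (Fin (n + 1)) ℝ) (i : Fin m)
    (l l' : Fin (n + 1)) (h : (l : ℕ) = l' + 1) :
    neville X i l = X i.succ l - X i.succ l' * (X 0 l')⁻¹ * X 0 l := by
  have hl' : (l' : ℕ) < n := by have := l.isLt; omega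
  obtain rfl : l = Fin.succ ⟨l', hl'⟩ := Fin.ext h
  rfl

/-- Inversion of the unipotent matrix with entries `w_{j'}⁻¹ w_j`: its inverse is bidiagonal. -/
lemma cumulative_iff {n : ℕ} (w y z : Fin (n + 1) → ℝ) (hw : ∀ j, w j ≠ 0) :
    (∀ j, z j + (∑ j' ∈ Finset.Iio j, z j' * (w j')⁻¹) * w j = y j) ↔
      z 0 = y 0 ∧ ∀ k : Fin n,
        z k.succ = y k.succ - y k.castSucc * (w k.castSucc)⁻¹ * w k.succ := by
  have hS : ∀ k : Fin n, ∑ j' ∈ Finset.Iio k.succ, z j' * (w j')⁻¹ =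
      z k.castSucc * (w k.castSucc)⁻¹ + ∑ j' ∈ Finset.Iio k.castSucc, z j' * (w j')⁻¹ := by
    intro k
    have : Finset.Iio k.succ = insert k.castSucc (Finset.Iio k.castSucc) := by
      ext x
      simp only [Finset.mem_Iio, Finset.mem_insert, Fin.lt_def, Fin.ext_iff, Fin.val_succ,
        Fin.val_castSucc]
      omega
    rw [this, Finset.sum_insert (by simp)]
  have hS' : ∀ k : Fin n, z k.castSucc + (∑ j' ∈ Finset.Iio k.castSucc, z j' * (w j')⁻¹) *
      w k.castSucc = y k.castSucc →
      ∑ j' ∈ Finset.Iio k.succ, z j' * (w j')⁻¹ = y k.castSucc * (w k.castSucc)⁻¹ := by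
    intro k h
    rw [hS, ← h, add_mul, mul_inv_cancel_right₀ (hw _)]
  have h0 : Finset.Iio (0 : Fin (n + 1)) = ∅ := by ext x; simp
  constructor
  · intro h
    refine ⟨by simpa [h0] using h 0, fun k => ?_⟩
    rw [← hS' k (h _), ← h k.succ]
    ring
  · rintro ⟨hz, hk⟩ j
    induction j using Fin.induction with
    | zero => simpa [h0] using hz
    | succ k ih => rw [hS' k ih, hk k]; ring

lemma XL_eq_iff {m n : ℕ} (T X : Matrix (Fin (m + 1)) (Fin (n + 1)) ℝ) (hX : ∀ j, X 0 j ≠ 0) :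
    XL T = X ↔ (∀ j, T 0 j = X 0 j) ∧ XL (T.submatrix Fin.succ id) = neville X := by
  have hrow : XL T = X ↔ (∀ j, T 0 j = X 0 j) ∧ ∀ i : Fin m, ∀ j,
      XL T i.succ j = X i.succ j := by
    rw [← Matrix.ext_iff, Fin.forall_fin_succ]
    simp only [XL_zero]
  rw [hrow]
  refine and_congr_right fun h => ?_
  rw [← Matrix.ext_iff]
  refine forall_congr' fun i => ?_
  simp only [XL_succ, h]
  rw [cumulative_iff (fun j => X 0 j) (fun j => X i.succ j) _ hX, Fin.forall_fin_succ]
  rfl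

/-! ### Positivity of minors under elimination -/

/-- All minors on consecutive columns (and arbitrary increasing rows) are positive. This part of
total positivity is inherited by `neville X`, and no other part is needed. -/
def ColContigPos {m n : ℕ} (X : Matrix (Fin m) (Fin n) ℝ) : Prop :=
  ∀ (r c : ℕ) (f : Fin r → Fin m) (g : Fin r → Fin n),
    StrictMono f → (∀ k, (g k : ℕ) = c + k) → 0 < (X.submatrix f g).det

lemma ColContigPos.pos {m n : ℕ} {X : Matrix (Fin m) (Fin n) ℝ} (hX : ColContigPos X)
    (i : Fin m) (j : Fin n) : 0 < X i j := by
  simpa using hX 1 j (fun _ => i) (fun _ => j) (Subsingleton.strictMono _) (by simp)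

lemma ColContigPos.neville {m n : ℕ} {X : Matrix (Fin (m + 1)) (Fin (n + 1)) ℝ}
    (hX : ColContigPos X) : ColContigPos (neville X) := by
  intro r c f g hf hg
  have h0 : ∀ j, X 0 j ≠ 0 := fun j => (hX.pos 0 j).ne'
  rcases r with _ | r
  · simp
  rcases c with _ | c
  -- Columns starting at the first one: elimination does not change the minor.
  · have hdet : (X.submatrix (fun k => (f k).succ) g).det =
        ((_root_.neville X).submatrix f g).det := by
      refine Matrix.det_eq_of_forall_col_eq_smul_add_pred
        (fun k => (X 0 (g k.castSucc))⁻¹ * X 0 (g k.succ)) ?_ ?_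
      · intro i
        have : g 0 = 0 := Fin.ext (by simpa using hg 0)
        simp [this, neville_zero]
      · intro i k
        simp only [Matrix.submatrix_apply]
        rw [neville_succ X (f i) (g k.succ) (g k.castSucc) (by simp [hg])]
        ring
    rw [← hdet]
    exact hX _ 0 _ g (fun a b h => Fin.succ_lt_succ_iff.mpr (hf h)) hg
  -- Otherwise border the minor with the first row and the preceding column.
  · have hc : c < n + 1 := by have := hg 0; have := (g 0).isLt; simp at *; omega
    let f' : Fin (r + 2) → Fin (m + 1) := Fin.cons 0 (fun k => (f k).succ)
    let g' : Fin (r + 2) → Fin (n + 1) := Fin.cons ⟨c, hc⟩ g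
    have hf' : StrictMono f' := by
      intro a b hab
      induction b using Fin.cases with
      | zero => exact absurd hab (Fin.not_lt_zero a)
      | succ b =>
        induction a using Fin.cases with
        | zero => exact Fin.succ_pos _
        | succ a => exact Fin.succ_lt_succ_iff.mpr (hf (Fin.succ_lt_succ_iff.mp hab))
    have hg' : ∀ k, (g' k : ℕ) = c + k := by
      intro k
      induction k using Fin.cases with
      | zero => simp [g']
      | succ k => simp [g', hg]; omega
    let B : Matrix (Fin (r + 2)) (Fin (r + 2)) ℝ := Matrix.of fun i j =>
      Fin.cases (X (f' i) (g' 0)) (fun l => X (f' i) (g' l.succ) -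
        X (f' i) (g' l.castSucc) * (X 0 (g' l.castSucc))⁻¹ * X 0 (g' l.succ)) j
    have hB0 : ∀ i, B i 0 = X (f' i) (g' 0) := fun i => rfl
    have hBs : ∀ i l, B i (Fin.succ l) = X (f' i) (g' l.succ) -
        X (f' i) (g' l.castSucc) * (X 0 (g' l.castSucc))⁻¹ * X 0 (g' l.succ) := fun i l => rfl
    have hdet : (X.submatrix f' g').det = B.det := by
      refine Matrix.det_eq_of_forall_col_eq_smul_add_pred
        (fun k => (X 0 (g' k.castSucc))⁻¹ * X 0 (g' k.succ)) (fun i => rfl) ?_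
      intro i k
      rw [hBs]
      simp only [Matrix.submatrix_apply]
      ring
    have hB : B.det = X 0 (g' 0) * ((_root_.neville X).submatrix f g).det := by
      rw [Matrix.det_succ_row_zero, Fin.sum_univ_succ, Finset.sum_eq_zero]
      · have hsub : B.submatrix Fin.succ (Fin.succAbove 0) =
            (_root_.neville X).submatrix f g := by
          ext i l
          rw [Matrix.submatrix_apply, Matrix.submatrix_apply, Fin.succAbove_zero, hBs,
            neville_succ X (f i) (g l) (g' l.castSucc) (by rw [hg, hg']; simp; omega)]
          rfl
        rw [hsub, hB0]
        simp [f']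
      · intro l _
        have : B 0 l.succ = 0 := by
          rw [hBs]
          have : f' 0 = 0 := rfl
          rw [this, mul_inv_cancel₀ (h0 _)]
          ring
        simp [this]
    have hpos := hX _ c f' g' hf' hg'
    rw [hdet, hB] at hpos
    exact (pos_iff_pos_of_mul_pos hpos).mp (hX.pos _ _)

/-! ### Existence and uniqueness -/

lemma exists_unique_of_colContigPos {m n : ℕ} (X : Matrix (Fin m) (Fin (n + 1)) ℝ)
    (hX : ColContigPos X) :
    ∃! T : Matrix (Fin m) (Fin (n + 1)) ℝ, EntrywisePos T ∧ XL T = X := by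
  induction m with
  | zero =>
    exact ⟨X, ⟨fun i => i.elim0, Subsingleton.elim _ _⟩, fun _ _ => Subsingleton.elim _ _⟩
  | succ m ih =>
    have h0 : ∀ j, X 0 j ≠ 0 := fun j => (hX.pos 0 j).ne'
    obtain ⟨T', ⟨hT', hXT'⟩, huniq⟩ := ih (neville X) hX.neville
    refine ⟨Matrix.of (Fin.cons (X 0) T'), ⟨?_, ?_⟩, ?_⟩
    · intro i j
      induction i using Fin.cases with
      | zero => exact hX.pos 0 j
      | succ i => exact hT' i j
    · exact (XL_eq_iff _ X h0).mpr ⟨fun j => rfl, hXT'⟩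
    · rintro T ⟨hT, hXT⟩
      obtain ⟨h1, h2⟩ := (XL_eq_iff T X h0).mp hXT
      have h3 := huniq (T.submatrix Fin.succ id) ⟨fun i j => hT i.succ j, h2⟩
      ext i j
      induction i using Fin.cases with
      | zero => exact h1 j
      | succ i => exact congrFun (congrFun h3 i) j

/-- every totally positive matrix has a unique L-scaffolding. -/
theorem lScaffolding_exists_unique {m n : ℕ} (X : Matrix (Fin m) (Fin n) ℝ)
    (hX : TotallyPositive X) :
    ∃! T : Matrix (Fin m) (Fin n) ℝ, EntrywisePos T ∧ XL T = X := by
  cases n with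
  | zero =>
    exact ⟨X, ⟨fun _ j => j.elim0, by ext i j; exact j.elim0⟩,
      fun T _ => by ext i j; exact j.elim0⟩
  | succ n =>
    refine exists_unique_of_colContigPos X fun r c f g hf hg => hX r f g hf fun a b hab => ?_
    rw [Fin.lt_def, hg, hg]
    exact Nat.add_lt_add_left hab c
end

section
/- Let X = (x_{ij}) be an m×n totally positive real matrix (rows indexed 1,…,m). For any choice of positive real numbers r₁, …, r_n, define x_{0j} = Σ_{ℓ=j}^{n} [det X[{1,2⋯},{j, ℓ+1⋯}] / det X[{1,2⋯},{ℓ, ℓ+1⋯}]] · r_ℓ for each j ∈ [n]. Then the (m+1)×n matrix obtained from X by adding the row (x_{01}, …, x_{0n}) above the first row of X is totally positive. -/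
/-!
Let `A` be the bordered matrix, with rows numbered from `0`, so that row `0` is the new one.  Two
facts give the theorem.

*A criterion* (`criterion`).  If `A` without row `0` is totally positive, and for every column `j`
the largest contiguous minor of `A` with top-left corner `(0, j)` is positive, then `A` is totally
positive.  By induction on the number of columns, only minors that use both row `0` and column `0`
are at stake (`corner`).  Dodgson condensation (`dodgson`) passes from the largest leading minor to
all the smaller leading minors.  The three-term Plücker relation (`three_term`) then allows a
column of such a minor to be replaced by the next column to its right (`exchange`), hence all column
sets to be reached, and by transposition all row sets.  In both relations every term other than the
minor to be determined and the minor already known to be positive avoids row `0` or column `0`.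

*The corner minors* (`leading_pos`).  Row `0` of `A` is `∑ l, r l • v l`, where the vector `v l`
vanishes to the right of column `l` and has `l`-th coordinate `1`.  In the corner minor at `(0, j)`
the vectors `v l` with `l < j` contribute nothing, as they vanish on the columns involved.  Those
with `l > j` contribute nothing either: expanding the minors that define `v l` along their first
column shows that on these columns `v l` is a linear combination of the other rows of the corner
minor.  The contribution of `v j` is `r j` times a minor of `X`, so the corner minor is positive.

Minors are handled for matrices indexed by `ℕ`, with rows and columns selected by strictly
increasing functions `ℕ → ℕ`, of which only the first `r` values matter for a minor of size `r`.
-/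

open Finset

/-! ### Minors indexed by natural numbers -/

/-- The minor of size `r` of the infinite matrix `a` with rows `f 0, …, f (r - 1)` and columns
`g 0, …, g (r - 1)`, in this order; the further values of `f` and `g` are irrelevant. -/
noncomputable def minorDet (r : ℕ) (a : ℕ → ℕ → ℝ) (f g : ℕ → ℕ) : ℝ :=
  (Matrix.of fun s t : Fin r => a (f s) (g t)).det

/-- The increasing enumeration of `ℕ` without `s`: the counterpart on `ℕ` of `Fin.succAbove`.
Thus `g ∘ skip s` is the sequence `g` with its entry number `s` deleted. -/
def skip (s i : ℕ) : ℕ := if i < s then i else i + 1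

lemma skip_strictMono (s : ℕ) : StrictMono (skip s) := by
  refine strictMono_nat_of_lt_succ fun i => ?_
  unfold skip; split_ifs <;> omega

lemma val_succAbove {r : ℕ} (p : Fin (r + 1)) (i : Fin r) :
    ((p.succAbove i : Fin (r + 1)) : ℕ) = skip p i := by
  simp only [Fin.succAbove, skip, Fin.lt_def, Fin.val_castSucc]
  split_ifs <;> simp

lemma minorDet_congr {r : ℕ} {a b : ℕ → ℕ → ℝ} {f f' g g' : ℕ → ℕ}
    (h : ∀ s < r, ∀ t < r, a (f s) (g t) = b (f' s) (g' t)) :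
    minorDet r a f g = minorDet r b f' g' := by
  unfold minorDet
  congr 1
  ext s t
  exact h s s.2 t t.2

lemma minorDet_transpose (r : ℕ) (a : ℕ → ℕ → ℝ) (f g : ℕ → ℕ) :
    minorDet r (fun i j => a j i) g f = minorDet r a f g := by
  unfold minorDet
  rw [← Matrix.det_transpose]
  rfl

lemma minorDet_row_zero (r : ℕ) (a : ℕ → ℕ → ℝ) (f g : ℕ → ℕ) :
    minorDet (r + 1) a f g = ∑ t ∈ range (r + 1),
      (-1) ^ t * a (f 0) (g t) * minorDet r a (f ∘ Nat.succ) (g ∘ skip t) := by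
  rw [Finset.sum_range]
  unfold minorDet
  rw [Matrix.det_succ_row_zero]
  refine Finset.sum_congr rfl fun t _ => ?_
  congr 2
  ext i j
  simp [val_succAbove]

lemma minorDet_column (r : ℕ) (a : ℕ → ℕ → ℝ) (f g : ℕ → ℕ) {s : ℕ} (hs : s < r + 1) :
    minorDet (r + 1) a f g = ∑ t ∈ range (r + 1),
      (-1) ^ (t + s) * a (f t) (g s) * minorDet r a (f ∘ skip t) (g ∘ skip s) := by
  rw [Finset.sum_range]
  unfold minorDet
  rw [Matrix.det_succ_column _ (⟨s, hs⟩ : Fin (r + 1))]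
  refine Finset.sum_congr rfl fun t _ => ?_
  congr 2
  ext i j
  simp [val_succAbove]

lemma minorDet_eq_zero_of_row {r : ℕ} {a : ℕ → ℕ → ℝ} {f g : ℕ → ℕ} {i j : ℕ}
    (hij : i ≠ j) (hi : i < r) (hj : j < r) (h : f i = f j) : minorDet r a f g = 0 := by
  unfold minorDet
  refine Matrix.det_zero_of_row_eq (i := ⟨i, hi⟩) (j := ⟨j, hj⟩) (by simpa using hij) ?_
  ext t
  simp [h]

lemma minorDet_eq_zero_of_column {r : ℕ} {a : ℕ → ℕ → ℝ} {f g : ℕ → ℕ} {i j : ℕ}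
    (hij : i ≠ j) (hi : i < r) (hj : j < r) (h : g i = g j) : minorDet r a f g = 0 := by
  rw [← minorDet_transpose]
  exact minorDet_eq_zero_of_row hij hi hj h

/-- The sequence `x, g 0, g 1, …`. -/
def consNat (x : ℕ) (g : ℕ → ℕ) : ℕ → ℕ
  | 0 => x
  | i + 1 => g i

/-! ### Determinantal identities -/

/-- The three-term Plücker relation.  The columns `c 0, …, c (q + 2)` and the rows `f 0, …, f (q + 1)`
are given; the larger minors omit one of the columns number `0`, `s + 1`, `s + 2`, and the smaller
ones omit row `f 0` and the other two of these columns.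

The signed maximal minors `(-1) ^ i * P i` form a vector in the kernel of the matrix.  Applying to
this relation between the columns the linear form `L`, which is the determinant with the remaining
`q` columns `h` and so vanishes on these, leaves three terms. -/
lemma three_term (q s : ℕ) (hs : s ≤ q) (a : ℕ → ℕ → ℝ) (f c : ℕ → ℕ) :
    minorDet (q + 2) a f (c ∘ skip (s + 1)) *
        minorDet (q + 1) a (f ∘ Nat.succ) (c ∘ Nat.succ ∘ skip (s + 1)) =
      minorDet (q + 2) a f (c ∘ Nat.succ) *
          minorDet (q + 1) a (f ∘ Nat.succ) (c ∘ skip (s + 1) ∘ skip (s + 1)) +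
        minorDet (q + 2) a f (c ∘ skip (s + 2)) *
          minorDet (q + 1) a (f ∘ Nat.succ) (c ∘ Nat.succ ∘ skip s) := by
  set h : ℕ → ℕ := fun i => if i < s then i + 1 else i + 3 with hh
  set P : ℕ → ℝ := fun i => minorDet (q + 2) a f (c ∘ skip i) with hP
  set L : ℕ → ℝ := fun i => ∑ t ∈ range (q + 1), (-1) ^ t * a (f (t + 1)) (c i) *
    minorDet q a (f ∘ Nat.succ ∘ skip t) (c ∘ h) with hL
  -- A matrix with the row `f t` repeated is singular.
  have hker : ∀ t < q + 2, ∑ i ∈ range (q + 3), (-1) ^ i * a (f t) (c i) * P i = 0 := by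
    intro t ht
    have h0 : minorDet (q + 3) a (f ∘ consNat t id) c = 0 :=
      minorDet_eq_zero_of_row (i := 0) (j := t + 1) (by omega) (by omega) (by omega) rfl
    rw [minorDet_row_zero] at h0
    exact h0
  have hsum : ∑ i ∈ range (q + 3), (-1) ^ i * P i * L i = 0 := by
    simp only [hL, Finset.mul_sum]
    rw [Finset.sum_comm]
    refine Finset.sum_eq_zero fun t ht => ?_
    have := hker (t + 1) (by simp at ht; omega)
    calc _ = (∑ i ∈ range (q + 3), (-1) ^ i * a (f (t + 1)) (c i) * P i) *
          ((-1) ^ t * minorDet q a (f ∘ Nat.succ ∘ skip t) (c ∘ h)) := by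
            rw [Finset.sum_mul]; exact Finset.sum_congr rfl fun i _ => by ring
      _ = 0 := by rw [this, zero_mul]
  -- `L i` is the minor with the columns `i` and `h`, which is singular when `i` belongs to `h`.
  have hLz : ∀ i < q, L (h i) = 0 := by
    intro i hi
    have h0 : minorDet (q + 1) a (f ∘ Nat.succ) (c ∘ consNat (h i) h) = 0 :=
      minorDet_eq_zero_of_column (i := 0) (j := i + 1) (by omega) (by omega) (by omega) rfl
    rw [minorDet_column (s := 0) _ _ _ _ (by omega)] at h0
    exact h0
  -- Placing the column `i` in position `p` among `h` instead of in front costs the sign `(-1) ^ p`.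
  have hL' : ∀ i p (k : ℕ → ℕ), p < q + 1 → k p = i → k ∘ skip p = h →
      minorDet (q + 1) a (f ∘ Nat.succ) (c ∘ k) = (-1) ^ p * L i := by
    intro i p k hp hk hkh
    rw [minorDet_column (s := p) _ _ _ _ hp, Finset.mul_sum]
    refine Finset.sum_congr rfl fun t _ => ?_
    rw [Function.comp_assoc c k, hkh]
    simp only [Function.comp_apply, hk, Function.comp_assoc]
    ring
  have e0 := hL' 0 0 (skip (s + 1) ∘ skip (s + 1)) (by omega) (by simp [skip])
    (by ext i; simp only [Function.comp_apply, skip, hh]; split_ifs <;> omega)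
  have e1 := hL' (s + 1) s (Nat.succ ∘ skip (s + 1)) (by omega) (by simp [skip])
    (by ext i; simp only [Function.comp_apply, skip, hh]; split_ifs <;> omega)
  have e2 := hL' (s + 2) s (Nat.succ ∘ skip s) (by omega) (by simp [skip])
    (by ext i; simp only [Function.comp_apply, skip, hh]; split_ifs <;> omega)
  have hsub : ({0, s + 1, s + 2} : Finset ℕ) ⊆ range (q + 3) := by
    intro i; simp; omega
  rw [← Finset.sum_subset hsub] at hsum
  · rw [Finset.sum_insert (by simp), Finset.sum_pair (by omega)] at hsum
    have hs1 : ((-1 : ℝ) ^ s) * (-1) ^ s = 1 := by rw [← mul_pow]; simp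
    have hP0 : P 0 = minorDet (q + 2) a f (c ∘ Nat.succ) := rfl
    rw [e0, e1, e2, ← hP0]
    change P (s + 1) * _ = _ + P (s + 2) * _
    linear_combination -hsum
  · intro i hi hi'
    simp only [Finset.mem_insert, Finset.mem_singleton, not_or, Finset.mem_range] at hi hi'
    have : i = h (if i ≤ s then i - 1 else i - 3) := by
      simp only [hh]; split_ifs <;> omega
    rw [this, hLz _ (by split_ifs <;> omega), mul_zero]

lemma minorDet_last_column {r : ℕ} {a : ℕ → ℕ → ℝ} {f g : ℕ → ℕ}
    (h : ∀ i < r, a (f i) (g r) = 0) (h1 : a (f r) (g r) = 1) :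
    minorDet (r + 1) a f g = minorDet r a f g := by
  rw [minorDet_column (s := r) _ _ _ _ (by omega), Finset.sum_range_succ,
    Finset.sum_eq_zero]
  · rw [h1, ← two_mul, pow_mul]
    simp only [even_two, Even.neg_pow, one_pow, mul_one, zero_add, one_mul]
    exact minorDet_congr fun s hs t ht => by simp [skip, hs, ht]
  · intro i hi
    rw [h i (by simpa using hi)]; ring

/-- Dodgson condensation for leading minors: the three-term relation for the matrix with a column
added, whose only nonzero entry is a `1` in the last row. -/
lemma dodgson (r : ℕ) (a : ℕ → ℕ → ℝ) :
    minorDet (r + 1) a id id * minorDet (r + 1) a Nat.succ Nat.succ =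
      minorDet (r + 1) a id Nat.succ * minorDet (r + 1) a Nat.succ id +
        minorDet (r + 2) a id id * minorDet r a Nat.succ Nat.succ := by
  set b : ℕ → ℕ → ℝ := fun i j => if j = r + 2 then (if i = r + 1 then 1 else 0) else a i j
    with hb
  have h := three_term r r le_rfl b id id
  have h1 : minorDet (r + 2) b id (id ∘ skip (r + 1)) = minorDet (r + 1) a id id := by
    rw [minorDet_last_column]
    · exact minorDet_congr fun s hs t ht => by
        simp only [hb, skip, Function.comp_apply, id, if_pos ht]; rw [if_neg (by omega)]
    · intro i hi; simp [hb, skip]; omega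
    · simp [hb, skip]
  have h2 : minorDet (r + 1) b (id ∘ Nat.succ) (id ∘ Nat.succ ∘ skip (r + 1)) =
      minorDet (r + 1) a Nat.succ Nat.succ :=
    minorDet_congr fun s hs t ht => by
      simp only [hb, skip, Function.comp_apply, id, if_pos ht]; rw [if_neg (by omega)]
  have h3 : minorDet (r + 2) b id (id ∘ Nat.succ) = minorDet (r + 1) a id Nat.succ := by
    rw [minorDet_last_column]
    · exact minorDet_congr fun s hs t ht => by
        simp only [hb, Function.comp_apply, id]; rw [if_neg (by omega)]
    · intro i hi; simp [hb]; omega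
    · simp [hb]
  have h4 : minorDet (r + 1) b (id ∘ Nat.succ) (id ∘ skip (r + 1) ∘ skip (r + 1)) =
      minorDet (r + 1) a Nat.succ id :=
    minorDet_congr fun s hs t ht => by
      simp only [hb, skip, Function.comp_apply, id, if_pos ht]; rw [if_neg (by omega)]
  have h5 : minorDet (r + 2) b id (id ∘ skip (r + 2)) = minorDet (r + 2) a id id :=
    minorDet_congr fun s hs t ht => by
      simp only [hb, skip, Function.comp_apply, id, if_pos ht]; rw [if_neg (by omega)]
  have h6 : minorDet (r + 1) b (id ∘ Nat.succ) (id ∘ Nat.succ ∘ skip r) =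
      minorDet r a Nat.succ Nat.succ := by
    rw [minorDet_last_column]
    · exact minorDet_congr fun s hs t ht => by
        simp only [hb, skip, Function.comp_apply, id, if_pos ht]; rw [if_neg (by omega)]
    · intro i hi; simp [hb, skip]; omega
    · simp [hb, skip]
  rw [h1, h2, h3, h4, h5, h6] at h
  exact h

/-! ### The criterion for total positivity -/

/-- Positivity of the minor with columns `0, …, r` propagates to all minors with the same rows that
contain column `0`, when the minors avoiding row `f 0` or column `0` are positive.

The proof is by induction on the sum of the column indices: the first entry `g s` that differs from
`s` is lowered by one. -/
lemma exchange {r N : ℕ} {a : ℕ → ℕ → ℝ} {f : ℕ → ℕ}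
    (h1 : ∀ g, StrictMono g → (∀ t < r, g t < N) → 0 < minorDet r a (f ∘ Nat.succ) g)
    (h2 : ∀ g, StrictMono g → (∀ t < r + 1, 0 < g t ∧ g t < N) → 0 < minorDet (r + 1) a f g)
    (h3 : 0 < minorDet (r + 1) a f id) (d : ℕ) :
    ∀ g, StrictMono g → g 0 = 0 → (∀ t < r + 1, g t < N) → ∑ t ∈ range (r + 1), g t = d →
      0 < minorDet (r + 1) a f g := by
  induction d using Nat.strong_induction_on with
  | _ d ih =>
  intro g hg hg0 hgN hd
  by_cases hid : ∀ t < r + 1, g t = t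
  · rw [minorDet_congr (b := a) (f' := f) (g' := id) fun s _ t ht => by rw [hid t ht]; rfl]
    exact h3
  have hex : ∃ t, t < r + 1 ∧ g t ≠ t := by push Not at hid; exact hid
  obtain ⟨hsr, hgs⟩ := Nat.find_spec hex
  have hmin : ∀ t < Nat.find hex, g t = t := fun t ht => by
    have := Nat.find_min hex ht
    by_contra hne
    exact this ⟨by omega, hne⟩
  generalize Nat.find hex = s at hsr hgs hmin
  obtain _ | s := s
  · exact absurd hg0 hgs
  obtain _ | q := r
  · omega
  have hgs' : s + 1 < g (s + 1) := lt_of_le_of_ne (hg.le_apply) (Ne.symm hgs)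
  -- `c` is `g` with `g (s + 1) - 1` inserted before `g (s + 1)`.
  set c : ℕ → ℕ := fun i => if i < s + 1 then g i else if i = s + 1 then g i - 1 else g (i - 1)
    with hc
  have hcm : StrictMono c := by
    refine strictMono_nat_of_lt_succ fun i => ?_
    have e0 := hmin s (by omega)
    rcases lt_trichotomy i s with h | h | h
    · simp only [hc]; rw [if_pos (by omega), if_pos (by omega)]; exact hg (by omega)
    · subst h; simp [hc, e0]; omega
    · rcases Nat.lt_or_ge i (s + 2) with h' | h'
      · obtain rfl : i = s + 1 := by omega
        simp [hc]; omega
      · simp only [hc]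
        rw [if_neg (by omega), if_neg (by omega), if_neg (by omega), if_neg (by omega)]
        exact hg (by omega)
  have hcN : ∀ i < q + 3, c i < N := by
    intro i hi
    rcases Nat.lt_or_ge i (s + 2) with h | h
    · have := hgN i (by omega)
      simp only [hc]; split_ifs <;> omega
    · simp only [hc]; rw [if_neg (by omega), if_neg (by omega)]; exact hgN _ (by omega)
  have hcg : c ∘ skip (s + 1) = g := by
    ext i
    simp only [hc, Function.comp_apply, skip]
    split_ifs <;> first | rfl | omega
  have hlow : 0 < minorDet (q + 2) a f (c ∘ skip (s + 2)) := by
    have hle : ∀ t, (c ∘ skip (s + 2)) t ≤ g t := by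
      intro t
      simp only [hc, Function.comp_apply, skip]
      split_ifs <;> first | omega | simp
    refine ih _ ?_ _ (hcm.comp (skip_strictMono _)) (by simp [hc, skip, hg0])
      (fun t ht => (hle t).trans_lt (hgN t ht)) rfl
    rw [← hd]
    refine Finset.sum_lt_sum (fun t _ => hle t) ⟨s + 1, by simpa using hsr, ?_⟩
    simp [hc, skip]; omega
  have key := three_term q s (by omega) a f c
  rw [hcg] at key
  have sk : ∀ p i, skip p i ≤ i + 1 := fun p i => by unfold skip; split_ifs <;> omega
  have hS : StrictMono Nat.succ := fun _ _ h => Nat.succ_lt_succ h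
  have p1 := h1 (c ∘ Nat.succ ∘ skip (s + 1)) (hcm.comp (hS.comp (skip_strictMono _)))
    (fun t ht => hcN _ (by have := sk (s + 1) t; simp only [Function.comp_apply]; omega))
  have p2 := h1 (c ∘ skip (s + 1) ∘ skip (s + 1))
    (hcm.comp ((skip_strictMono _).comp (skip_strictMono _)))
    (fun t ht => hcN _ (by
      have := sk (s + 1) t; have := sk (s + 1) (skip (s + 1) t)
      simp only [Function.comp_apply]; omega))
  have p3 := h1 (c ∘ Nat.succ ∘ skip s) (hcm.comp (hS.comp (skip_strictMono _)))
    (fun t ht => hcN _ (by have := sk s t; simp only [Function.comp_apply]; omega))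
  have p4 := h2 (c ∘ Nat.succ) (hcm.comp hS)
    (fun t ht => ⟨(Nat.zero_le _).trans_lt (hcm (Nat.succ_pos t)), hcN _ (by omega)⟩)
  refine pos_of_mul_pos_left (b := minorDet (q + 1) a (f ∘ Nat.succ)
    (c ∘ Nat.succ ∘ skip (s + 1))) ?_ p1.le
  rw [key]
  positivity

/-- If all minors avoiding row `0` or column `0` are positive, and so is the largest leading minor,
then all minors are positive. -/
lemma corner {M N : ℕ} {a : ℕ → ℕ → ℝ}
    (h1 : ∀ r f g, StrictMono f → StrictMono g → (∀ s < r, 0 < f s ∧ f s < M) →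
      (∀ t < r, g t < N) → 0 < minorDet r a f g)
    (h2 : ∀ r f g, StrictMono f → StrictMono g → (∀ s < r, f s < M) →
      (∀ t < r, 0 < g t ∧ g t < N) → 0 < minorDet r a f g)
    (h3 : 0 < minorDet (min M N) a id id)
    (r : ℕ) (f g : ℕ → ℕ) (hf : StrictMono f) (hg : StrictMono g)
    (hfM : ∀ s < r, f s < M) (hgN : ∀ t < r, g t < N) : 0 < minorDet r a f g := by
  obtain _ | r := r
  · simp [minorDet]
  have hS : StrictMono Nat.succ := fun _ _ h => Nat.succ_lt_succ h
  rcases Nat.eq_zero_or_pos (f 0) with hf0 | hf0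
  swap
  · exact h1 _ _ _ hf hg (fun s hs => ⟨hf0.trans_le (hf.monotone (Nat.zero_le s)), hfM s hs⟩) hgN
  rcases Nat.eq_zero_or_pos (g 0) with hg0 | hg0
  swap
  · exact h2 _ _ _ hf hg hfM (fun s hs => ⟨hg0.trans_le (hg.monotone (Nat.zero_le s)), hgN s hs⟩)
  have hrM : r < M := (hf.le_apply).trans_lt (hfM r (by omega))
  have hrN : r < N := (hg.le_apply).trans_lt (hgN r (by omega))
  -- Descent from the largest leading minor to the one of size `r + 1`.
  have hlead : ∀ e, e ≤ min M N - (r + 1) → 0 < minorDet (min M N - e) a id id := by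
    intro e
    induction e with
    | zero => intro _; exact h3
    | succ e ih =>
      intro he
      obtain ⟨k, hk⟩ : ∃ k, min M N - e = k + 2 := ⟨min M N - e - 2, by omega⟩
      have hk' : min M N - (e + 1) = k + 1 := by omega
      have hpos := ih (by omega)
      rw [hk] at hpos
      rw [hk']
      have p1 := h1 (k + 1) Nat.succ Nat.succ hS hS (fun s hs => by omega) (fun s hs => by omega)
      have p2 := h1 k Nat.succ Nat.succ hS hS (fun s hs => by omega) (fun s hs => by omega)
      have p3 := h1 (k + 1) Nat.succ id hS strictMono_id (fun s hs => by omega)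
        (fun s hs => by simp only [id]; omega)
      have p4 := h2 (k + 1) id Nat.succ strictMono_id hS (fun s hs => by simp only [id]; omega)
        (fun s hs => by omega)
      refine pos_of_mul_pos_left (b := minorDet (k + 1) a Nat.succ Nat.succ) ?_ p1.le
      rw [dodgson]
      positivity
  have hl := hlead (min M N - (r + 1)) le_rfl
  rw [show min M N - (min M N - (r + 1)) = r + 1 by omega] at hl
  -- First the columns are moved from `0, …, r` to `g`, then the rows to `f`.
  have hid : 0 < minorDet (r + 1) a id g :=
    exchange (f := id)
      (fun g' hg' hb => h1 _ _ _ hS hg' (fun s hs => by simp; omega) hb)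
      (fun g' hg' hb => h2 _ _ _ strictMono_id hg' (fun s hs => by simp; omega) hb)
      hl _ g hg hg0 hgN rfl
  rw [← minorDet_transpose] at hid ⊢
  refine exchange (f := g) (N := M) (fun g' hg' hb => ?_) (fun g' hg' hb => ?_)
      hid _ f hf hf0 hfM rfl
  · rw [minorDet_transpose]
    exact h2 _ _ _ hg' (hg.comp hS) hb
      (fun t ht => ⟨(Nat.zero_le _).trans_lt (hg (Nat.succ_pos t)), hgN _ (by omega)⟩)
  · rw [minorDet_transpose]
    exact h1 _ _ _ hg' hg hb hgN

/-- An `M × N` matrix is totally positive if its minors avoiding row `0` are positive, as well as its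
largest contiguous minors with top-left corner in row `0`. -/
lemma criterion {M : ℕ} (N : ℕ) : ∀ (a : ℕ → ℕ → ℝ),
    (∀ r f g, StrictMono f → StrictMono g → (∀ s < r, 0 < f s ∧ f s < M) →
      (∀ t < r, g t < N) → 0 < minorDet r a f g) →
    (∀ j < N, 0 < minorDet (min M (N - j)) a id (j + ·)) →
    ∀ r f g, StrictMono f → StrictMono g → (∀ s < r, f s < M) → (∀ t < r, g t < N) →
      0 < minorDet r a f g := by
  induction N with
  | zero =>
    intro a _ _ r f g _ _ _ hg
    obtain _ | r := r
    · simp [minorDet]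
    · exact absurd (hg 0 (by omega)) (by omega)
  | succ N ih =>
    intro a h1 h2
    refine corner h1 (fun r f g hf hg hfM hgN => ?_) ?_
    · obtain _ | r := r
      · simp [minorDet]
      have hg0 : ∀ t, 0 < g t := fun t =>
        (hgN 0 (by omega)).1.trans_le (hg.monotone (Nat.zero_le t))
      have := ih (fun i j => a i (j + 1)) ?_ ?_ (r + 1) f (fun t => g t - 1) hf ?_ hfM ?_
      · rw [minorDet_congr (b := fun i j => a i (j + 1)) (f' := f) (g' := fun t => g t - 1)]
        · exact this
        · intro s _ t _
          simp only [Nat.sub_add_cancel (hg0 t)]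
      · intro r f g hf hg hfM hgN
        exact h1 r f (fun t => g t + 1) hf (fun x y h => Nat.succ_lt_succ (hg h)) hfM
          (fun t ht => Nat.succ_lt_succ (hgN t ht))
      · intro j hj
        have := h2 (j + 1) (by omega)
        rw [Nat.add_sub_add_right] at this
        rw [minorDet_congr (b := a) (f' := id) (g' := (j + 1 + ·))]
        · exact this
        · intro s _ t _
          simp only [Nat.add_right_comm]
      · intro x y h
        have := hg h; have := hg0 x
        show g x - 1 < g y - 1
        omega
      · intro t ht
        have := hgN t ht
        show g t - 1 < N
        omega
    · have := h2 0 (by omega)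
      simpa [minorDet] using this

/-! ### The corner minors of the bordered matrix -/

/-- The minor `det X[{1, 2⋯}, {j, ℓ + 1⋯}]`, with indices shifted to start from `0`, as a function of
`j`.  It is defined for all `j`, also those not satisfying `j ≤ l`.  For `m = 0` the truncated
subtraction makes it an entry of `x`; it is used for `0 < m` only. -/
noncomputable def bvec (m n : ℕ) (x : ℕ → ℕ → ℝ) (l j : ℕ) : ℝ :=
  minorDet (min (m - 1) (n - 1 - l) + 1) x id (consNat j (l + 1 + ·))

/-- The corner minors of the bordered matrix are positive: the one with top-left corner `(0, j)` is
`r j` times the minor of `X` whose top-left corner is in its first row and column `j + 1`. -/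
lemma leading_pos {m n : ℕ} (hm : 0 < m) {x a : ℕ → ℕ → ℝ}
    (hx : ∀ r f g, StrictMono f → StrictMono g → (∀ s < r, f s < m) →
      (∀ t < r, g t < n) → 0 < minorDet r x f g)
    (r : ℕ → ℝ) (hr : ∀ l < n, 0 < r l)
    (ha0 : ∀ j < n, a 0 j = ∑ l ∈ range n,
      (if j ≤ l then bvec m n x l j / bvec m n x l l else 0) * r l)
    (ha1 : ∀ i j, a (i + 1) j = x i j) {j : ℕ} (hj : j < n) :
    0 < minorDet (min (m + 1) (n - j)) a id (j + ·) := by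
  have hadd : ∀ j : ℕ, StrictMono (j + ·) := fun j _ _ h => Nat.add_lt_add_left h j
  obtain ⟨k, hk⟩ : ∃ k, k = min m (n - 1 - j) := ⟨_, rfl⟩
  rw [show min (m + 1) (n - j) = k + 1 by omega, minorDet_row_zero]
  set C : ℕ → ℝ := fun t => minorDet k x id ((j + ·) ∘ skip t) with hC
  have hCa : ∀ t, minorDet k a (id ∘ Nat.succ) ((j + ·) ∘ skip t) = C t := fun t =>
    minorDet_congr fun s _ u _ => ha1 _ _
  have hrow : ∀ i < k, ∑ t ∈ range (k + 1), (-1) ^ t * x i (j + t) * C t = 0 := by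
    intro i hi
    have h0 : minorDet (k + 1) x (consNat i id) (j + ·) = 0 :=
      minorDet_eq_zero_of_row (i := 0) (j := i + 1) (by omega) (by omega) (by omega) rfl
    rw [minorDet_row_zero] at h0
    exact h0
  -- The vector indexed by `l > j` is a combination of the rows below it, hence contributes `0`.
  have hlt : ∀ l, j < l → l < n → ∑ t ∈ range (k + 1), (-1) ^ t *
      (if j + t ≤ l then bvec m n x l (j + t) / bvec m n x l l else 0) * C t = 0 := by
    intro l hjl hln
    set p := min (m - 1) (n - 1 - l) with hp
    have hv : ∀ t < k + 1,
        (if j + t ≤ l then bvec m n x l (j + t) / bvec m n x l l else 0) =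
        ∑ i ∈ range (p + 1), x i (j + t) *
          ((-1) ^ i * minorDet p x (skip i) (l + 1 + ·) / bvec m n x l l) := by
      intro t ht
      -- Beyond column `l` the minor has a repeated column, so the truncation at `l` is immaterial.
      have e1 : (if j + t ≤ l then bvec m n x l (j + t) / bvec m n x l l else 0) =
          bvec m n x l (j + t) / bvec m n x l l := by
        split_ifs with h
        · rfl
        · have : bvec m n x l (j + t) = 0 :=
            minorDet_eq_zero_of_column (i := 0) (j := j + t - l) (by omega) (by omega) (by omega)
              (by
                rw [show j + t - l = (j + t - (l + 1)) + 1 by omega]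
                show j + t = l + 1 + (j + t - (l + 1))
                omega)
          rw [this, zero_div]
      rw [e1, bvec, minorDet_column (s := 0) _ _ _ _ (by omega), Finset.sum_div]
      refine Finset.sum_congr rfl fun i _ => ?_
      have : minorDet p x (id ∘ skip i) (consNat (j + t) (l + 1 + ·) ∘ skip 0) =
        minorDet p x (skip i) (l + 1 + ·) := rfl
      rw [← hp, this]
      simp only [consNat, id, add_zero]
      ring
    calc _ = ∑ t ∈ range (k + 1), ∑ i ∈ range (p + 1), ((-1) ^ t * x i (j + t) * C t) *
          ((-1) ^ i * minorDet p x (skip i) (l + 1 + ·) / bvec m n x l l) := by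
            refine Finset.sum_congr rfl fun t ht => ?_
            rw [hv t (by simpa using ht), Finset.mul_sum, Finset.sum_mul]
            exact Finset.sum_congr rfl fun i _ => by ring
      _ = 0 := by
            rw [Finset.sum_comm]
            refine Finset.sum_eq_zero fun i hi => ?_
            rw [← Finset.sum_mul, hrow i (by simp at hi; omega), zero_mul]
  have hjj : bvec m n x j j ≠ 0 := by
    have h0 : bvec m n x j j = minorDet (min (m - 1) (n - 1 - j) + 1) x id (j + ·) :=
      minorDet_congr fun s _ t _ => by
        congr 1
        cases t with
        | zero => rfl
        | succ t => simp only [consNat]; omega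
    rw [h0]
    exact (hx _ _ _ strictMono_id (hadd j) (fun s hs => by simp only [id]; omega)
      (fun t ht => by show j + t < n; omega)).ne'
  have hsum : ∑ t ∈ range (k + 1), (-1) ^ t * a (id 0) (j + t) *
      minorDet k a (id ∘ Nat.succ) ((j + ·) ∘ skip t) = r j * C 0 := by
    calc _ = ∑ l ∈ range n, r l * ∑ t ∈ range (k + 1), (-1) ^ t *
          (if j + t ≤ l then bvec m n x l (j + t) / bvec m n x l l else 0) * C t := by
            simp only [Finset.mul_sum]
            rw [Finset.sum_comm]
            refine Finset.sum_congr rfl fun t ht => ?_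
            simp only [Finset.mem_range] at ht
            rw [hCa, id, ha0 _ (by omega), Finset.mul_sum, Finset.sum_mul]
            exact Finset.sum_congr rfl fun l _ => by ring
      _ = r j * C 0 := by
            rw [Finset.sum_eq_single_of_mem j (by simpa using hj)]
            · rw [Finset.sum_eq_single_of_mem 0 (by simp)]
              · simp [div_self hjj]
              · intro t _ ht
                rw [if_neg (by omega)]; ring
            · intro l hl hne
              rcases lt_or_gt_of_ne hne with h | h
              · rw [Finset.sum_eq_zero, mul_zero]
                intro t _
                rw [if_neg (by omega)]; ring
              · rw [hlt l h (by simpa using hl), mul_zero]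
  have hfin : 0 < r j * C 0 := by
    refine mul_pos (hr j hj) (hx _ _ _ strictMono_id ((hadd j).comp (skip_strictMono 0))
      (fun s hs => by simp only [id]; omega) (fun t ht => ?_))
    simp only [Function.comp_apply, skip]
    rw [if_neg (by omega)]
    omega
  rw [← hsum] at hfin
  exact hfin

/-! ### Transfer to matrices indexed by `Fin` -/

/-- The matrix `X` extended by zeros to a matrix indexed by `ℕ × ℕ`. -/
noncomputable def extend {m n : ℕ} (X : Matrix (Fin m) (Fin n) ℝ) (i j : ℕ) : ℝ :=
  if h : i < m ∧ j < n then X ⟨i, h.1⟩ ⟨j, h.2⟩ else 0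

lemma extend_val {m n : ℕ} (X : Matrix (Fin m) (Fin n) ℝ) (i : Fin m) (j : Fin n) :
    extend X i j = X i j := by
  simp [extend]

lemma TotallyPositive.minorDet_pos {m n : ℕ} {X : Matrix (Fin m) (Fin n) ℝ}
    (hX : TotallyPositive X) (r : ℕ) (f g : ℕ → ℕ) (hf : StrictMono f) (hg : StrictMono g)
    (hfm : ∀ s < r, f s < m) (hgn : ∀ t < r, g t < n) : 0 < minorDet r (extend X) f g := by
  have := hX r (fun s => ⟨f s, hfm s s.2⟩) (fun t => ⟨g t, hgn t t.2⟩)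
    (fun _ _ h => hf h) (fun _ _ h => hg h)
  refine this.trans_eq (congrArg Matrix.det ?_)
  ext s t
  exact (extend_val X ⟨f s, hfm s s.2⟩ ⟨g t, hgn t t.2⟩).symm

lemma exists_strictMono_extend {r m : ℕ} (f : Fin r → Fin m) (hf : StrictMono f) :
    ∃ F : ℕ → ℕ, StrictMono F ∧ ∀ s : Fin r, F s = f s := by
  refine ⟨fun i => if h : i < r then f ⟨i, h⟩ else m + i, ?_, fun s => by simp⟩
  intro i j hij
  dsimp only
  split_ifs with h1 h2
  · exact hf hij
  · have := (f ⟨i, h1⟩).2; omega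
  · omega
  · omega

lemma totallyPositive_of_minorDet {m n : ℕ} {X : Matrix (Fin m) (Fin n) ℝ}
    (h : ∀ r f g, StrictMono f → StrictMono g → (∀ s < r, f s < m) → (∀ t < r, g t < n) →
      0 < minorDet r (extend X) f g) : TotallyPositive X := by
  intro r f g hf hg
  obtain ⟨F, hF, hFf⟩ := exists_strictMono_extend f hf
  obtain ⟨G, hG, hGg⟩ := exists_strictMono_extend g hg
  have := h r F G hF hG (fun s hs => by rw [hFf ⟨s, hs⟩]; exact (f _).2)
    (fun t ht => by rw [hGg ⟨t, ht⟩]; exact (g _).2)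
  refine this.trans_eq (congrArg Matrix.det ?_)
  ext s t
  simp [hFf, hGg, extend_val]

/-- The case in which the contiguous part is empty (`m = 1` or `l = n - 1`) is included. -/
lemma borderMinorTL_eq {m n : ℕ} (hm : 0 < m) (X : Matrix (Fin m) (Fin n) ℝ) {j l : ℕ}
    (hjl : j ≤ l) (hl : l < n) :
    borderMinorTL X 1 (j + 1) 2 (l + 2) = bvec m n (extend X) l j := by
  unfold borderMinorTL bvec
  rw [dif_pos (by omega)]
  split_ifs with h
  · rw [show min (m - 1) (n - 1 - l) + 1 = min (m - 2) (n - (l + 2)) + 2 by omega]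
    unfold minorDet
    congr 1
    ext s t
    have hs := s.2
    have ht := t.2
    have hr : (if (s : ℕ) = 0 then (⟨1 - 1, by omega⟩ : Fin m)
        else ⟨2 - 1 + ((s : ℕ) - 1), by omega⟩) = ⟨s, by omega⟩ := by
      split_ifs <;> ext <;> simp <;> omega
    simp only [Matrix.submatrix_apply, Matrix.of_apply, id]
    rw [hr]
    rcases t with ⟨_ | t, ht'⟩
    · simp only [consNat, if_true, Nat.add_sub_cancel]
      exact (extend_val X ⟨s, by omega⟩ ⟨j, by omega⟩).symm
    · simp only [consNat, Nat.succ_ne_zero, if_false]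
      simp only at ht
      have : l + 2 - 1 + (t + 1 - 1) = l + 1 + t := by omega
      simp only [this]
      exact (extend_val X ⟨s, by omega⟩ ⟨l + 1 + t, by omega⟩).symm
  · rw [show min (m - 1) (n - 1 - l) = 0 by omega]
    refine Eq.trans ?_ (Matrix.det_fin_one _).symm
    exact (extend_val X ⟨0, hm⟩ ⟨j, by omega⟩).symm

/-- conversely, adding above a TP matrix `X` the row determined by any
strongly positive vector `r` through the stated minor formulas yields a TP matrix. -/
theorem bordering_above_totallyPositive {m n : ℕ} (X : Matrix (Fin m) (Fin n) ℝ)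
    (hX : TotallyPositive X) (r : Fin n → ℝ) (hr : ∀ l, 0 < r l) :
    TotallyPositive (Matrix.of (Fin.cons
      (fun j : Fin n =>
        ∑ l ∈ Finset.univ.filter (fun l : Fin n => j ≤ l),
          borderMinorTL X 1 ((j : ℕ) + 1) 2 ((l : ℕ) + 2) /
              borderMinorTL X 1 ((l : ℕ) + 1) 2 ((l : ℕ) + 2) * r l)
      fun i' : Fin m => X i') : Matrix (Fin (m + 1)) (Fin n) ℝ) := by
  rcases Nat.eq_zero_or_pos m with rfl | hm
  · -- Without rows in `X` all the border minors are `1`, and the matrix is the row of sums of `r`.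
    intro q f g hf hg
    obtain _ | _ | q := q
    · simp
    · rw [Matrix.det_fin_one, Matrix.submatrix_apply, show f 0 = 0 from Fin.ext (by omega)]
      simp only [Matrix.of_apply, Fin.cons_zero, borderMinorTL]
      refine Finset.sum_pos (fun l _ => ?_) ⟨g 0, by simp⟩
      simpa using hr l
    · have : (0 : Fin (q + 2)) < 1 := by simp
      exact absurd (Fin.lt_def.1 (hf this)) (by omega)
  refine totallyPositive_of_minorDet ?_
  set A : Matrix (Fin (m + 1)) (Fin n) ℝ := Matrix.of (Fin.cons _ _) with hA
  have ha1 : ∀ i j, extend A (i + 1) j = extend X i j := by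
    intro i j
    simp only [extend, Nat.add_lt_add_iff_right]
    split_ifs with h
    · rfl
    · rfl
  refine criterion n (extend A) (fun q f g hf hg hfm hgn => ?_) (fun j hj => ?_)
  · obtain _ | q := q
    · simp [minorDet]
    have hf0 : ∀ s, 0 < f s := fun s =>
      (hfm 0 (by omega)).1.trans_le (hf.monotone (Nat.zero_le s))
    rw [minorDet_congr (b := extend X) (f' := fun s => f s - 1) (g' := g)]
    · refine hX.minorDet_pos _ _ _ (fun s t h => ?_) hg (fun s hs => ?_) hgn
      · have := hf h; have := hf0 s
        show f s - 1 < f t - 1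
        omega
      · have := hfm s hs
        show f s - 1 < m
        omega
    · intro s _ t _
      rw [← ha1, Nat.sub_add_cancel (hf0 s)]
  · refine leading_pos hm hX.minorDet_pos (fun l => if h : l < n then r ⟨l, h⟩ else 0)
      (fun l hl => by simpa [hl] using hr ⟨l, hl⟩) (fun j hj => ?_) ha1 hj
    have e := extend_val A 0 ⟨j, hj⟩
    simp only [Fin.val_zero] at e
    rw [e, Finset.sum_range]
    simp only [hA, Matrix.of_apply, Fin.cons_zero]
    rw [Finset.sum_filter]
    refine Finset.sum_congr rfl fun l _ => ?_
    simp only [Fin.le_def, l.2, dif_pos, Fin.eta]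
    split_ifs with h
    · rw [borderMinorTL_eq hm X h l.2, borderMinorTL_eq hm X le_rfl l.2]
    · rw [zero_mul]
end

section
/- Let X = (x_{ij}) be an m×n totally positive real matrix, let 1 ≤ k ≤ m−1, let T be the Γ-scaffolding of X, let T̂ be the k×n matrix consisting of the first k rows of T, and let X̂ = X_Γ(T̂). Suppose X′ is an (m+1)×n totally positive matrix whose rows 1, …, k equal rows 1, …, k of X and whose rows k+2, …, m+1 equal rows k+1, …, m of X, with inserted row (x′_{k+1,1}, …, x′_{k+1,n}). Then there exist strongly positive vectors r, q, s ∈ ℝⁿ such that for every j ∈ [n]: (A) Σ_{ℓ=j}^{n} [det X[{k+1, k+2⋯},{j, ℓ+1⋯}] / det X[{k+1, k+2⋯},{ℓ, ℓ+1⋯}]] r_ℓ = Σ_{i=1}^{j} [det X[{⋯k−1, k},{⋯i−1, j}] / det X[{⋯k−1, k},{⋯i−1, i}]] q_i; (B) r_j = Σ_{i=1}^{j} [det X̂[{⋯k−1, k},{⋯i−1, j}] / det X̂[{⋯k−1, k},{⋯i−1, i}]] s_i; and x′_{k+1,j} equals the common value of the two sides of equation (A) for that j. -/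
/-!
Fix a matrix `B` with positive minors. The numbers
`c_{jℓ} = det B[{1, 2⋯},{j, ℓ+1⋯}] / det B[{1, 2⋯},{ℓ, ℓ+1⋯}]` are, for fixed `ℓ`, a linear
combination of rows of `B` which is `1` in column `ℓ` and vanishes in the columns just to the right
of `ℓ`. So `x_j = ∑_{ℓ ≥ j} c_{jℓ} y_ℓ` is a unitriangular system, and subtracting a suitable
combination of rows of `B` from `x` truncates this sum at `ℓ ≤ i` while clearing columns to the
right of `i` (`exists_truncation`). Taking determinants, minors of the solutions `y` times minors
of `B` are minors of the rows `x` stacked on `B` (`det_stack_contig`, `det_stack_one`). Two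
consequences carry the proof.

* If `x` stacked on `B` has positive minors, then `y` is positive (`exists_pos_solution`). For the
  new row over the rows of `X` below it this gives `r`; for the new row under the rows above it,
  after reversing all rows and columns, this gives `q`.
* If several rows stacked on `B` have positive minors, then so does the matrix of their
  solutions `y` (`contigPos_of_coef`).

For `s`, apply the second consequence to the rows `1, …, k + 1` of `X'` with `B` the rows
`k + 1, …, m` of `X`. The solution for row `k + 1` is `r`, and the solution for the first `k` rows
is exactly `X̂` (`XGamma_factor`). The latter holds because adding a row to `T` multiplies the
path sums by a triangular matrix (`XGamma_castSucc`), and the product of these triangular matrices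
over the rows `k + 1, …, m` of `T` is the matrix `(c_{jℓ})` of the rows `k + 1, …, m` of `X`
(`coef_step`). So `X̂` with `r` as an additional last row has positive contiguous minors, and the
reversed form of the first consequence gives `s`.
-/

open Finset

/-! ### Bordered minors and elimination -/

/-- The matrix `A` as a function of 0-based natural-number indices, extended by zero. This
lets rows be shifted, reversed and stacked without transporting along `Fin` equalities. -/
noncomputable def zeroExt {M N : ℕ} (A : Matrix (Fin M) (Fin N) ℝ) (a b : ℕ) : ℝ :=
  if h : a < M ∧ b < N then A ⟨a, h.1⟩ ⟨b, h.2⟩ else 0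

/-- All minors of `A` with consecutive rows below `M` and consecutive columns below `n` are
positive. (Size zero is harmless: the empty determinant is `1`.) -/
def ContigPos (A : ℕ → ℕ → ℝ) (M n : ℕ) : Prop :=
  ∀ r a b : ℕ, a + r ≤ M → b + r ≤ n →
    0 < (Matrix.of fun s t : Fin r => A (a + s) (b + t)).det

/-- The increasing column sequence `j, l + 1, l + 2, …` (for `j ≤ l`), indexed from zero. -/
def borderCol (j l t : ℕ) : ℕ := if t = 0 then j else l + t

@[simp] lemma borderCol_zero (j l : ℕ) : borderCol j l 0 = j := rfl

lemma borderCol_of_ne {t : ℕ} (j l : ℕ) (h : t ≠ 0) : borderCol j l t = l + t := if_neg h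

lemma borderCol_self (l t : ℕ) : borderCol l l t = l + t := by
  rcases eq_or_ne t 0 with h | h
  · simp [h]
  · exact borderCol_of_ne l l h

/-- The minor of `B` on the top `q + 1` rows and the columns `j, l + 1, …, l + q`. -/
noncomputable def topMinor (B : ℕ → ℕ → ℝ) (q j l : ℕ) : ℝ :=
  (Matrix.of fun s t : Fin (q + 1) => B s (borderCol j l t)).det

/-- The matrix of the triangular system attached to the `M` rows of `B`: the ratio of the
largest minors on initial rows and columns `j, l + 1, l + 2, …`, respectively
`l, l + 1, l + 2, …`, that fit into `M` rows and `n` columns. In terms of 1-based indices this is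
`det B[{1, 2⋯},{j, ℓ+1⋯}] / det B[{1, 2⋯},{ℓ, ℓ+1⋯}]`. -/
noncomputable def coef (B : ℕ → ℕ → ℝ) (M n j l : ℕ) : ℝ :=
  topMinor B (min (M - 1) (n - 1 - l)) j l / topMinor B (min (M - 1) (n - 1 - l)) l l

/-- As `j` varies, `topMinor B q j l` is a fixed linear combination of the rows `0, …, q` of `B`
(Laplace expansion along the first column). -/
lemma topMinor_span (B : ℕ → ℕ → ℝ) (q l : ℕ) :
    ∃ c : ℕ → ℝ, (∀ s, q < s → c s = 0) ∧
      ∀ j, topMinor B q j l = ∑ s ∈ range (q + 1), c s * B s j := by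
  refine ⟨fun s => if h : s < q + 1 then (-1) ^ s *
    (Matrix.of fun u t : Fin q => B ((⟨s, h⟩ : Fin (q + 1)).succAbove u) (l + (t + 1))).det
    else 0, ?_, ?_⟩
  · intro s hs
    exact dif_neg (by omega)
  · intro j
    rw [topMinor, Matrix.det_succ_column_zero, ← Fin.sum_univ_eq_sum_range
      (fun s => (if h : s < q + 1 then (-1) ^ s *
        (Matrix.of fun u t : Fin q => B ((⟨s, h⟩ : Fin (q + 1)).succAbove u) (l + (t + 1))).det
        else 0) * B s j)]
    refine Finset.sum_congr rfl fun s _ => ?_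
    rw [dif_pos s.isLt]
    have : ((Matrix.of fun s t : Fin (q + 1) => B s (borderCol j l t)).submatrix
        s.succAbove Fin.succ) =
        Matrix.of fun u t : Fin q => B (s.succAbove u) (l + (t + 1)) := by
      ext u t
      simp [borderCol_of_ne]
    rw [this]
    simp
    ring

/-- The linear combination of rows in `topMinor_span` vanishes in the columns `l + 1, …, l + q`. -/
lemma topMinor_eq_zero (B : ℕ → ℕ → ℝ) {q j l : ℕ} (h1 : l < j) (h2 : j ≤ l + q) :
    topMinor B q j l = 0 := by
  refine Matrix.det_zero_of_column_eq (i := 0) (j := ⟨j - l, by omega⟩) ?_ ?_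
  · intro h
    have := congrArg Fin.val h
    simp at this
    omega
  · intro s
    have h3 : j - l ≠ 0 := by omega
    have h4 : l + (j - l) = j := by omega
    simp [h3, h4, borderCol_of_ne]

lemma topMinor_self (B : ℕ → ℕ → ℝ) (q l : ℕ) :
    topMinor B q l l = (Matrix.of fun s t : Fin (q + 1) => B s (l + t)).det := by
  unfold topMinor
  congr 1
  ext s t
  simp [borderCol_self]

lemma topMinor_self_pos {B : ℕ → ℕ → ℝ} {M n : ℕ} (hB : ContigPos B M n) {q l : ℕ}
    (h1 : q + 1 ≤ M) (h2 : l + (q + 1) ≤ n) : 0 < topMinor B q l l := by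
  rw [topMinor_self]
  simpa using hB (q + 1) 0 l (by omega) h2

lemma coef_self {B : ℕ → ℕ → ℝ} {M n : ℕ} (hB : ContigPos B M n) (hM : 1 ≤ M) {l : ℕ}
    (hl : l < n) : coef B M n l l = 1 :=
  div_self (topMinor_self_pos hB (by omega) (by omega)).ne'

/-- If `x` is the image of `y` under the triangular system of `B`, then subtracting a suitable
combination of the first `min M (n - 1 - i)` rows of `B` from `x` removes all contributions of
`y l` with `i < l` in the columns `j ≤ i`, and clears as many columns to the right of `i`. -/
lemma exists_truncation {B : ℕ → ℕ → ℝ} {M n : ℕ} (hM : 1 ≤ M) {x y : ℕ → ℝ}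
    (hx : ∀ j < n, x j = ∑ l ∈ Ico j n, coef B M n j l * y l) {i : ℕ} (hi : i < n) :
    ∃ c : ℕ → ℝ,
      (∀ j ≤ i, x j - ∑ s ∈ range (min M (n - 1 - i)), c s * B s j =
        ∑ l ∈ Ico j (i + 1), coef B M n j l * y l) ∧
      (∀ j, i < j → j ≤ i + min M (n - 1 - i) →
        x j - ∑ s ∈ range (min M (n - 1 - i)), c s * B s j = 0) := by
  choose c hc0 hc using fun l => topMinor_span B (min (M - 1) (n - 1 - l)) l
  set p := min M (n - 1 - i) with hp
  have key : ∀ j, ∑ s ∈ range p, (∑ l ∈ Ico (i + 1) n,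
      c l s / topMinor B (min (M - 1) (n - 1 - l)) l l * y l) * B s j =
      ∑ l ∈ Ico (i + 1) n, coef B M n j l * y l := by
    intro j
    simp_rw [Finset.sum_mul]
    rw [Finset.sum_comm]
    refine Finset.sum_congr rfl fun l hl => ?_
    rw [Finset.mem_Ico] at hl
    have e1 : ∑ s ∈ range (min (M - 1) (n - 1 - l) + 1), c l s * B s j =
        ∑ s ∈ range p, c l s * B s j := by
      refine Finset.sum_subset ?_ ?_
      · intro s hs
        rw [Finset.mem_range] at hs ⊢
        omega
      · intro s _ hs
        rw [Finset.mem_range] at hs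
        simp [hc0 l s (by omega)]
    rw [coef, hc l j, e1, Finset.sum_div, Finset.sum_mul]
    exact Finset.sum_congr rfl fun s _ => by ring
  refine ⟨fun s => ∑ l ∈ Ico (i + 1) n,
    c l s / topMinor B (min (M - 1) (n - 1 - l)) l l * y l, fun j hj => ?_, fun j hj hj2 => ?_⟩
  · rw [key j, hx j (by omega), ← Finset.sum_Ico_consecutive _ (by omega : j ≤ i + 1) (by omega)]
    ring
  · rw [key j, hx j (by omega), ← Finset.sum_Ico_consecutive _ (by omega : i + 1 ≤ j) (by omega)]
    have h0 : ∑ l ∈ Ico (i + 1) j, coef B M n j l * y l = 0 := by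
      refine Finset.sum_eq_zero fun l hl => ?_
      rw [Finset.mem_Ico] at hl
      rw [coef, topMinor_eq_zero B (by omega) (by omega)]
      simp
    rw [h0, zero_add, sub_self]

/-- Row elimination: if multiples of the rows of `B` clear the columns `L` of the rows `x`,
then the determinant of the stacked matrix is block triangular. -/
lemma det_stack {r p : ℕ} (x : Fin r → ℕ → ℝ) (B : ℕ → ℕ → ℝ) (J : Fin r → ℕ) (L : Fin p → ℕ)
    (c : Fin r → ℕ → ℝ) (h : ∀ ρ t, x ρ (L t) - ∑ s ∈ range p, c ρ s * B s (L t) = 0) :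
    (Matrix.of fun u v : Fin r ⊕ Fin p =>
        Sum.elim x (fun s : Fin p => B s) u (Sum.elim J L v)).det =
      (Matrix.of fun ρ σ => x ρ (J σ) - ∑ s ∈ range p, c ρ s * B s (J σ)).det *
        (Matrix.of fun s t : Fin p => B s (L t)).det := by
  have : (Matrix.of fun u v : Fin r ⊕ Fin p =>
        Sum.elim x (fun s : Fin p => B s) u (Sum.elim J L v)) =
      Matrix.fromBlocks 1 (Matrix.of fun ρ (s : Fin p) => c ρ s) 0 1 *
      Matrix.fromBlocks (Matrix.of fun ρ σ => x ρ (J σ) - ∑ s ∈ range p, c ρ s * B s (J σ)) 0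
        (Matrix.of fun (s : Fin p) σ => B s (J σ)) (Matrix.of fun s t : Fin p => B s (L t)) := by
    rw [Matrix.fromBlocks_multiply]
    ext u v
    rcases u with ρ | s <;> rcases v with σ | t
    · simp [Matrix.mul_apply, Fin.sum_univ_eq_sum_range (fun s => c ρ s * B s (J σ))]
    · have := h ρ t
      simp only [Matrix.of_apply, Sum.elim_inl, Sum.elim_inr, Matrix.fromBlocks_apply₁₂,
        Matrix.mul_apply, Matrix.one_mul, zero_add,
        Fin.sum_univ_eq_sum_range (fun s => c ρ s * B s (L t))]
      linarith
    · simp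
    · simp
  rw [this, Matrix.det_mul, Matrix.det_fromBlocks_zero₂₁, Matrix.det_fromBlocks_zero₁₂]
  simp

/-- The truncated system is unitriangular, so it preserves minors on the columns
`i + 1 - r, …, i`. -/
lemma det_truncation {B : ℕ → ℕ → ℝ} {M n : ℕ} (hB : ContigPos B M n) (hM : 1 ≤ M)
    {r i : ℕ} (hi : i < n) (hr : r ≤ i + 1) (y : Fin r → ℕ → ℝ) :
    (Matrix.of fun ρ σ : Fin r => ∑ l ∈ Ico (i + 1 - r + (σ : ℕ)) (i + 1),
      coef B M n (i + 1 - r + σ) l * y ρ l).det =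
    (Matrix.of fun ρ σ : Fin r => y ρ (i + 1 - r + σ)).det := by
  have : (Matrix.of fun ρ σ : Fin r => ∑ l ∈ Ico (i + 1 - r + (σ : ℕ)) (i + 1),
      coef B M n (i + 1 - r + σ) l * y ρ l) =
      (Matrix.of fun ρ σ : Fin r => y ρ (i + 1 - r + σ)) *
      (Matrix.of fun τ σ : Fin r =>
        if σ ≤ τ then coef B M n (i + 1 - r + σ) (i + 1 - r + τ) else 0) := by
    ext ρ σ
    rw [Matrix.mul_apply]
    simp only [Matrix.of_apply, mul_ite, mul_zero]
    let F : ℕ → ℝ := fun t => if (σ : ℕ) ≤ t then y ρ (i + 1 - r + t) *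
          coef B M n (i + 1 - r + σ) (i + 1 - r + t) else 0
    have e1 : ∀ τ : Fin r, (if σ ≤ τ then y ρ (i + 1 - r + τ) *
        coef B M n (i + 1 - r + σ) (i + 1 - r + τ) else 0) =
        F τ := fun τ => by
      simp only [F, Fin.le_def]
    rw [Finset.sum_congr rfl fun τ _ => e1 τ, Fin.sum_univ_eq_sum_range F, ← Finset.sum_filter]
    refine (Finset.sum_bij (fun t _ => i + 1 - r + t) ?_ ?_ ?_ ?_).symm
    · intro t ht
      simp only [Finset.mem_filter, Finset.mem_range, Finset.mem_Ico] at ht ⊢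
      omega
    · intro a _ b _ hab
      omega
    · intro l hl
      simp only [Finset.mem_Ico] at hl
      refine ⟨l - (i + 1 - r), ?_, by omega⟩
      simp only [Finset.mem_filter, Finset.mem_range]
      omega
    · intro t _
      ring
  rw [this, Matrix.det_mul, Matrix.det_of_isLowerTriangular
    (Matrix.of fun τ σ : Fin r => if σ ≤ τ then _ else 0)]
  · rw [Finset.prod_eq_one, mul_one]
    intro σ _
    simpa using coef_self hB hM (l := i + 1 - r + σ) (by omega)
  · intro a b hab
    have : ¬ b ≤ a := by simpa using hab
    simp only [Matrix.of_apply, if_neg this]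

/-- A contiguous minor of the solutions `y`, times a contiguous minor of `B`, is a minor of the
right-hand sides `x` stacked on `B`. -/
lemma det_stack_contig {B : ℕ → ℕ → ℝ} {M n : ℕ} (hB : ContigPos B M n) (hM : 1 ≤ M)
    {r i : ℕ} (hi : i < n) (hr : r ≤ i + 1) {x y : Fin r → ℕ → ℝ}
    (hx : ∀ ρ, ∀ j < n, x ρ j = ∑ l ∈ Ico j n, coef B M n j l * y ρ l) :
    (Matrix.of fun u v : Fin r ⊕ Fin (min M (n - 1 - i)) =>
        Sum.elim x (fun s : Fin (min M (n - 1 - i)) => B s) u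
          (Sum.elim (fun σ : Fin r => i + 1 - r + (σ : ℕ))
            (fun t : Fin (min M (n - 1 - i)) => i + 1 + (t : ℕ)) v)).det =
      (Matrix.of fun ρ σ : Fin r => y ρ (i + 1 - r + σ)).det *
        (Matrix.of fun s t : Fin (min M (n - 1 - i)) => B s (i + 1 + t)).det := by
  choose c hc1 hc2 using fun ρ => exists_truncation hM (hx ρ) hi
  rw [det_stack x B _ _ c (fun ρ t => hc2 ρ _ (by omega) (by have := t.isLt; omega)),
    ← det_truncation hB hM hi hr y]
  congr 2
  ext ρ σ
  exact hc1 ρ _ (by have := σ.isLt; omega)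

/-- The one-row case of the elimination identity, with the column `j ≤ i` separated from the
contiguous block `i + 1, i + 2, …`. -/
lemma det_stack_one {B : ℕ → ℕ → ℝ} {M n : ℕ} (hM : 1 ≤ M) {i j : ℕ} (hi : i < n) (hj : j ≤ i)
    {A : ℕ → ℕ → ℝ} (hA : ∀ a b, A (a + 1) b = B a b) {y : ℕ → ℝ}
    (hx : ∀ j < n, A 0 j = ∑ l ∈ Ico j n, coef B M n j l * y l) :
    topMinor A (min M (n - 1 - i)) j i =
      (∑ l ∈ Ico j (i + 1), coef B M n j l * y l) *
        (Matrix.of fun s t : Fin (min M (n - 1 - i)) => B s (i + 1 + t)).det := by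
  obtain ⟨c, hc1, hc2⟩ := exists_truncation hM hx hi
  have := det_stack (r := 1) (p := min M (n - 1 - i)) (fun _ => A 0) B (fun _ => j)
    (fun t => i + 1 + t) (fun _ => c)
    (fun ρ t => hc2 _ (by omega) (by have := t.isLt; omega))
  rw [Matrix.det_fin_one (Matrix.of _), Matrix.of_apply, hc1 j hj] at this
  rw [← this, topMinor, ← Matrix.det_submatrix_equiv_self
    (finSumFinEquiv.trans (finCongr (add_comm 1 (min M (n - 1 - i)))))]
  congr 1
  ext u v
  have e1 : ∀ t : ℕ, borderCol j i (1 + t) = i + 1 + t := fun t => by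
    rw [borderCol_of_ne _ _ (by omega)]
    ring
  rcases u with ρ | s <;> rcases v with σ | t <;> simp [e1, ← hA, add_comm _ 1]

/-! ### The triangular system and positivity -/

/-- The system is unitriangular, hence solvable by back substitution. -/
lemma exists_solution {B : ℕ → ℕ → ℝ} {M n : ℕ} (hB : ContigPos B M n) (hM : 1 ≤ M)
    (x : ℕ → ℝ) : ∃ y : ℕ → ℝ, ∀ j < n, x j = ∑ l ∈ Ico j n, coef B M n j l * y l := by
  have key : ∀ d, ∃ y : ℕ → ℝ, ∀ j < n, n - d ≤ j →
      x j = ∑ l ∈ Ico j n, coef B M n j l * y l := by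
    intro d
    induction d with
    | zero => exact ⟨0, fun j h1 h2 => by omega⟩
    | succ d ih =>
      obtain ⟨y, hy⟩ := ih
      by_cases hd : n < d + 1
      · exact ⟨y, fun j h1 h2 => hy j h1 (by omega)⟩
      set a := n - (d + 1) with ha
      refine ⟨Function.update y a (x a - ∑ l ∈ Ico (a + 1) n, coef B M n a l * y l),
        fun j h1 h2 => ?_⟩
      have hupd : ∀ b, a < b → ∑ l ∈ Ico b n, coef B M n j l *
          Function.update y a (x a - ∑ l ∈ Ico (a + 1) n, coef B M n a l * y l) l =
          ∑ l ∈ Ico b n, coef B M n j l * y l := by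
        intro b hb
        refine Finset.sum_congr rfl fun l hl => ?_
        rw [Finset.mem_Ico] at hl
        rw [Function.update_of_ne (by omega)]
      rcases eq_or_lt_of_le h2 with h | h
      · subst h
        rw [Finset.sum_eq_sum_Ico_succ_bot h1, hupd _ (by omega), coef_self hB hM h1,
          Function.update_self]
        ring
      · rw [hupd j h]
        exact hy j h1 (by omega)
  obtain ⟨y, hy⟩ := key n
  exact ⟨y, fun j hj => hy j hj (by omega)⟩

lemma ContigPos.tail {A : ℕ → ℕ → ℝ} {M n : ℕ} (hA : ContigPos A (M + 1) n) :
    ContigPos (fun a b => A (a + 1) b) M n := by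
  intro r a b h1 h2
  have := hA r (a + 1) b (by omega) h2
  simpa only [add_right_comm] using this

/-- Reversing the order of both rows and columns preserves contiguous minors. -/
lemma ContigPos.rev {A : ℕ → ℕ → ℝ} {M n : ℕ} (hA : ContigPos A (M + 1) n) :
    ContigPos (fun a b => A (M - a) (n - 1 - b)) (M + 1) n := by
  intro r a b h1 h2
  have := hA r (M + 1 - a - r) (n - b - r) (by omega) (by omega)
  rw [← Matrix.det_submatrix_equiv_self Fin.revPerm] at this
  convert this using 2
  ext s t
  have := s.isLt
  have := t.isLt
  simp only [Matrix.of_apply, Matrix.submatrix_apply, Fin.revPerm_apply, Fin.val_rev]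
  congr 1 <;> omega

/-- The row on top of `B` has positive coordinates in the triangular system of `B`: each
coordinate is a ratio of contiguous minors. -/
lemma exists_pos_solution {A : ℕ → ℕ → ℝ} {M n : ℕ} (hA : ContigPos A (M + 1) n) (hM : 1 ≤ M) :
    ∃ y : ℕ → ℝ, (∀ l < n, 0 < y l) ∧
      ∀ j < n, A 0 j = ∑ l ∈ Ico j n, coef (fun a b => A (a + 1) b) M n j l * y l := by
  obtain ⟨y, hy⟩ := exists_solution hA.tail hM (A 0)
  refine ⟨y, fun i hi => ?_, hy⟩
  have h := det_stack_one hM hi le_rfl (fun a b => rfl) hy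
  rw [Nat.Ico_succ_singleton, Finset.sum_singleton, coef_self hA.tail hM hi, one_mul] at h
  have h1 : 0 < topMinor A (min M (n - 1 - i)) i i := topMinor_self_pos hA (by omega) (by omega)
  have h2 := hA.tail (min M (n - 1 - i)) 0 (i + 1) (by omega) (by omega)
  simp only [zero_add] at h2
  rw [h] at h1
  exact (pos_iff_pos_of_mul_pos h1).2 h2

/-- Composing the triangular system of the rows `1, 2, …` of `A` with the partial sums weighted
by the coordinates `y` of row `0` gives the triangular system of the rows `0, 1, 2, …`. -/
lemma coef_step {A : ℕ → ℕ → ℝ} {M n : ℕ} (hA : ContigPos A (M + 1) n) (hM : 1 ≤ M)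
    {y : ℕ → ℝ}
    (hy : ∀ j < n, A 0 j = ∑ l ∈ Ico j n, coef (fun a b => A (a + 1) b) M n j l * y l)
    {i j : ℕ} (hi : i < n) (hj : j ≤ i) :
    ∑ l ∈ Ico j (i + 1), coef (fun a b => A (a + 1) b) M n j l * y l =
      coef A (M + 1) n j i * y i := by
  have h1 := det_stack_one hM hi hj (fun a b => rfl) hy
  have h2 := det_stack_one hM hi le_rfl (fun a b => rfl) hy
  rw [Nat.Ico_succ_singleton, Finset.sum_singleton, coef_self hA.tail hM hi, one_mul] at h2
  have h3 : 0 < topMinor A (min M (n - 1 - i)) i i := topMinor_self_pos hA (by omega) (by omega)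
  rw [coef, Nat.add_sub_cancel, h1, h2]
  rw [h2] at h3
  have h4 := left_ne_zero_of_mul h3.ne'
  have h5 := right_ne_zero_of_mul h3.ne'
  field_simp

/-- All minors of `A` with rows below `M` and columns below `n` are positive. -/
def MinorsPos (A : ℕ → ℕ → ℝ) (M n : ℕ) : Prop :=
  ∀ (r : ℕ) (f g : Fin r → ℕ), StrictMono f → StrictMono g → (∀ s, f s < M) → (∀ t, g t < n) →
    0 < (Matrix.of fun s t : Fin r => A (f s) (g t)).det

lemma MinorsPos.contigPos {A : ℕ → ℕ → ℝ} {M n : ℕ} (hA : MinorsPos A M n) : ContigPos A M n :=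
  fun r a b h1 h2 => hA r (fun s => a + s) (fun t => b + t)
    (fun s t h => Nat.add_lt_add_left h a) (fun s t h => Nat.add_lt_add_left h b)
    (fun s => by omega) (fun s => by omega)

lemma MinorsPos.contigPos_add {A : ℕ → ℕ → ℝ} {M n : ℕ} (hA : MinorsPos A M n) {c K : ℕ}
    (h : c + K ≤ M) : ContigPos (fun a b => A (c + a) b) K n := by
  intro r a b h1 h2
  have := hA.contigPos r (c + a) b (by omega) h2
  simpa only [add_assoc] using this

lemma TotallyPositive.minorsPos {M N : ℕ} {A : Matrix (Fin M) (Fin N) ℝ}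
    (hA : TotallyPositive A) : MinorsPos (zeroExt A) M N := by
  intro r f g hf hg hf' hg'
  have := hA r (fun s => ⟨f s, hf' s⟩) (fun t => ⟨g t, hg' t⟩) (fun s t h => hf h)
    (fun s t h => hg h)
  convert this using 2
  ext s t
  simp [zeroExt, hf', hg']

/-- If the first `K` rows of `A` are written in the triangular system of the remaining `M` rows,
then the coordinate rows have positive contiguous minors. -/
lemma contigPos_of_coef {A : ℕ → ℕ → ℝ} {K M n : ℕ} (hA : MinorsPos A (K + M) n) (hM : 1 ≤ M)
    {Z : ℕ → ℕ → ℝ} (hZ : ∀ a < K, ∀ j < n,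
      A a j = ∑ l ∈ Ico j n, coef (fun a b => A (K + a) b) M n j l * Z a l) :
    ContigPos Z K n := by
  intro r a b h1 h2
  rcases Nat.eq_zero_or_pos r with rfl | hr
  · simp
  have hB : ContigPos (fun a b => A (K + a) b) M n := hA.contigPos_add le_rfl
  obtain ⟨i, hi⟩ : ∃ i, i + 1 = b + r := ⟨b + r - 1, by omega⟩
  have hb : b = i + 1 - r := by omega
  have hin : i < n := by omega
  have h := det_stack_contig hB hM hin (by omega : r ≤ i + 1)
    (x := fun ρ : Fin r => A (a + ρ)) (y := fun ρ : Fin r => Z (a + ρ))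
    (fun ρ j hj => hZ _ (by have := ρ.isLt; omega) j hj)
  set p := min M (n - 1 - i) with hp
  have hpos := hB p 0 (i + 1) (by omega) (by omega)
  simp only [zero_add] at hpos
  have hbig := hA (r + p) (fun s => if (s : ℕ) < r then a + s else K + (s - r))
    (fun t => b + t) ?_ ?_ ?_ ?_
  · rw [← Matrix.det_submatrix_equiv_self finSumFinEquiv] at hbig
    have e : (Matrix.of fun s t : Fin (r + p) =>
        A (if (s : ℕ) < r then a + s else K + (s - r)) (b + t)).submatrix
          finSumFinEquiv finSumFinEquiv =
        (Matrix.of fun u v : Fin r ⊕ Fin p =>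
          Sum.elim (fun ρ : Fin r => A (a + ρ)) (fun s : Fin p => fun b => A (K + s) b) u
          (Sum.elim (fun σ : Fin r => i + 1 - r + (σ : ℕ))
            (fun t : Fin p => i + 1 + (t : ℕ)) v)) := by
      have e1 : ∀ t : ℕ, b + (r + t) = i + 1 + t := fun t => by omega
      ext u v
      rcases u with ρ | s <;> rcases v with σ | t <;> simp [e1, hb.symm]
    rw [e, h] at hbig
    rw [hb]
    exact (pos_iff_pos_of_mul_pos hbig).2 hpos
  · intro s t hst
    have : (s : ℕ) < t := hst
    dsimp only
    split_ifs <;> omega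
  · intro s t hst
    exact Nat.add_lt_add_left hst b
  · intro s
    have := s.isLt
    split_ifs <;> omega
  · intro t
    have := t.isLt
    omega

/-! ### Path sums when a row is added -/

lemma sort_map_castSucc {k : ℕ} (I : Finset (Fin k)) :
    (I.map Fin.castSuccEmb).sort (· ≤ ·) = (I.sort (· ≤ ·)).map Fin.castSucc :=
  (Finset.map_sort Fin.castSuccEmb I (· ≤ ·) (· ≤ ·) fun _ _ _ _ => Iff.rfl).symm

lemma sort_insert_last {k : ℕ} (I : Finset (Fin k)) :
    (insert (Fin.last k) (I.map Fin.castSuccEmb)).sort (· ≤ ·) =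
      (I.sort (· ≤ ·)).map Fin.castSucc ++ [Fin.last k] := by
  have h1 : ((I.sort (· ≤ ·)).map Fin.castSucc ++ [Fin.last k]).Nodup := by
    rw [List.nodup_append]
    refine ⟨(Finset.sort_nodup _ _).map (Fin.castSucc_injective k), List.nodup_singleton _, ?_⟩
    simp [Fin.castSucc_ne_last]
  have h2 : ((I.sort (· ≤ ·)).map Fin.castSucc ++ [Fin.last k]).Pairwise (· ≤ ·) := by
    rw [List.pairwise_append]
    refine ⟨?_, List.pairwise_singleton _ _, ?_⟩
    · rw [← sort_map_castSucc]
      exact Finset.pairwise_sort _ _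
    · intro a _ b hb
      rw [List.mem_singleton.1 hb]
      exact Fin.le_last a
  rw [← (List.toFinset_sort _ h1).2 h2]
  congr 1
  ext a
  simp

/-- A path with no turn in the last row is a path of the matrix without that row. -/
lemma gammaWeight_castSucc {k n : ℕ} (T : Matrix (Fin (k + 1)) (Fin n) ℝ)
    (I : Finset (Fin k)) (J : Finset (Fin n)) :
    gammaWeight T (I.map Fin.castSuccEmb) J =
      gammaWeight (Matrix.of fun a b => T (Fin.castSucc a) b) I J := by
  unfold gammaWeight
  by_cases h : I.Nonempty ∧ J.Nonempty ∧ I.card = J.card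
  · have h' : (I.map Fin.castSuccEmb).Nonempty ∧ J.Nonempty ∧
        (I.map Fin.castSuccEmb).card = J.card := by simpa using h
    rw [dif_pos h, dif_pos h']
    have hrow : ∀ s < I.card, ((I.map Fin.castSuccEmb).sort (· ≤ ·)).getD s
        ((I.map Fin.castSuccEmb).min' h'.1) =
        Fin.castSucc ((I.sort (· ≤ ·)).getD s (I.min' h.1)) := by
      intro s hs
      rw [sort_map_castSucc, List.getD_eq_getElem _ _ (by simpa),
        List.getD_eq_getElem _ _ (by simpa)]
      simp
    have h0 : 0 < I.card := h.1.card_pos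
    simp only [Finset.card_map, Matrix.of_apply]
    rw [hrow 0 h0]
    congr 1
    refine Finset.prod_congr rfl fun s hs => ?_
    rw [Finset.mem_range] at hs
    rw [hrow (s + 1) (by omega)]
  · have h' : ¬ ((I.map Fin.castSuccEmb).Nonempty ∧ J.Nonempty ∧
        (I.map Fin.castSuccEmb).card = J.card) := by simpa using h
    rw [dif_neg h, dif_neg h']

lemma gammaWeight_singleton {m n : ℕ} (T : Matrix (Fin m) (Fin n) ℝ) (i : Fin m) (j : Fin n) :
    gammaWeight T {i} {j} = T i j := by
  simp [gammaWeight]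

/-- Adding a turn in column `j` of the last row to a path ending in column `l` multiplies its
weight by `t_{last, j} / t_{last, l}`. -/
lemma gammaWeight_extend {k n : ℕ} (T : Matrix (Fin (k + 1)) (Fin n) ℝ)
    {I : Finset (Fin k)} {J : Finset (Fin n)} (hI : I.Nonempty) (hIJ : I.card = J.card)
    {j l : Fin n} (hl : J.min = (l : WithTop (Fin n))) (hjl : j < l) :
    gammaWeight T (insert (Fin.last k) (I.map Fin.castSuccEmb)) (insert j J) =
      gammaWeight (Matrix.of fun a b => T (Fin.castSucc a) b) I J *
        (T (Fin.last k) j / T (Fin.last k) l) := by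
  have hJ : J.Nonempty := by
    rw [← Finset.card_pos, ← hIJ]
    exact hI.card_pos
  have hjJ : ∀ b ∈ J, j < b := fun b hb => by
    have := Finset.min_le hb
    rw [hl] at this
    exact lt_of_lt_of_le hjl (by exact_mod_cast this)
  have hjn : j ∉ J := fun h => lt_irrefl _ (hjJ j h)
  have hcI : (insert (Fin.last k) (I.map Fin.castSuccEmb)).card = I.card + 1 := by
    rw [Finset.card_insert_of_notMem (by simp [Fin.castSucc_ne_last]), Finset.card_map]
  have hcJ : (insert j J).card = J.card + 1 := Finset.card_insert_of_notMem hjn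
  have hsJ : (insert j J).sort (· ≤ ·) = j :: J.sort (· ≤ ·) :=
    Finset.sort_insert (h₁ := fun b hb => (hjJ b hb).le) (h₂ := hjn)
  have h : I.Nonempty ∧ J.Nonempty ∧ I.card = J.card := ⟨hI, hJ, hIJ⟩
  have h' : (insert (Fin.last k) (I.map Fin.castSuccEmb)).Nonempty ∧ (insert j J).Nonempty ∧
      (insert (Fin.last k) (I.map Fin.castSuccEmb)).card = (insert j J).card :=
    ⟨Finset.insert_nonempty _ _, Finset.insert_nonempty _ _, by rw [hcI, hcJ, hIJ]⟩
  unfold gammaWeight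
  rw [dif_pos h, dif_pos h']
  obtain ⟨p, hp⟩ : ∃ p, I.card = p + 1 := ⟨I.card - 1, by have := hI.card_pos; omega⟩
  have hrow : ∀ d, ∀ s < p + 1, ((insert (Fin.last k) (I.map Fin.castSuccEmb)).sort (· ≤ ·)).getD s
      d = Fin.castSucc ((I.sort (· ≤ ·)).getD s (I.min' h.1)) := by
    intro d s hs
    rw [sort_insert_last, List.getD_eq_getElem _ _ (by simp; omega),
      List.getD_eq_getElem _ _ (by simp; omega), List.getElem_append_left (by simp; omega)]
    simp
  have hlast : ∀ d, ((insert (Fin.last k) (I.map Fin.castSuccEmb)).sort (· ≤ ·)).getD (p + 1)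
      d = Fin.last k := by
    intro d
    rw [sort_insert_last, List.getD_eq_getElem _ _ (by simp; omega),
      List.getElem_append_right (by simp; omega)]
    simp
  have hcol : ∀ d, ∀ s < p + 1, ((insert j J).sort (· ≤ ·)).getD (p + 1 - s) d =
      (J.sort (· ≤ ·)).getD (p - s) (J.min' h.2.1) := by
    intro d s hs
    rw [hsJ, show p + 1 - s = (p - s) + 1 by omega, List.getD_cons_succ,
      List.getD_eq_getElem _ _ (by simp; omega), List.getD_eq_getElem _ _ (by simp; omega)]
  have hcol0 : ∀ d, ((insert j J).sort (· ≤ ·)).getD 0 d = j := by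
    intro d
    rw [hsJ, List.getD_cons_zero]
  have hmin : (J.sort (· ≤ ·)).getD 0 (J.min' h.2.1) = l := by
    rw [List.getD_eq_getElem _ _ (by simpa using hJ.card_pos), ← Finset.min'_eq_sorted_zero (h := hJ)]
    exact_mod_cast (Finset.coe_min' hJ).trans hl
  simp only [hcI, hp, Nat.add_sub_cancel, Matrix.of_apply]
  rw [Finset.prod_range_succ, hlast, hrow _ 0 (by omega), hcol _ 0 (by omega),
    hcol _ p (by omega), Nat.sub_self (p + 1), hcol0, Nat.sub_self p, hmin, ← mul_assoc]
  congr 1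
  · congr 1
    refine Finset.prod_congr rfl fun s hs => ?_
    rw [Finset.mem_range] at hs
    rw [hrow _ (s + 1) (by omega), hcol _ s (by omega), hcol _ (s + 1) (by omega)]
  · ring

lemma XGamma_last {k n : ℕ} (T : Matrix (Fin (k + 1)) (Fin n) ℝ) (j : Fin n) :
    XGamma T (Fin.last k) j = T (Fin.last k) j := by
  have hI : Finset.univ.filter (fun I : Finset (Fin (k + 1)) =>
      I.min = (Fin.last k : WithTop (Fin (k + 1)))) = {{Fin.last k}} := by
    ext I
    simp only [Finset.mem_filter, Finset.mem_univ, true_and, Finset.mem_singleton]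
    constructor
    · intro h
      refine Finset.eq_singleton_iff_unique_mem.2 ⟨Finset.mem_of_min h, fun a ha => ?_⟩
      have := Finset.min_le ha
      rw [h] at this
      exact le_antisymm (Fin.le_last a) (by exact_mod_cast this)
    · rintro rfl
      exact Finset.min_singleton
  have hJ : Finset.univ.filter (fun J : Finset (Fin n) =>
      J.min = (j : WithTop (Fin n)) ∧ J.card = ({Fin.last k} : Finset (Fin (k + 1))).card) =
      {{j}} := by
    ext J
    simp only [Finset.mem_filter, Finset.mem_univ, true_and, Finset.mem_singleton,
      Finset.card_singleton]
    constructor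
    · rintro ⟨h1, h2⟩
      obtain ⟨a, rfl⟩ := Finset.card_eq_one.1 h2
      rw [Finset.mem_singleton.1 (Finset.mem_of_min h1)]
    · rintro rfl
      exact ⟨Finset.min_singleton, Finset.card_singleton _⟩
  rw [XGamma, Matrix.of_apply, hI, Finset.sum_singleton, hJ, Finset.sum_singleton,
    gammaWeight_singleton]

lemma min_map_castSucc {k : ℕ} (I : Finset (Fin k)) (ρ : Fin k) :
    (I.map Fin.castSuccEmb).min = (Fin.castSucc ρ : WithTop (Fin (k + 1))) ↔
      I.min = (ρ : WithTop (Fin k)) := by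
  constructor
  · intro h
    obtain ⟨a, ha, hae⟩ := Finset.mem_map.1 (Finset.mem_of_min h)
    have hae' : a = ρ := Fin.castSucc_injective k hae
    subst hae'
    refine le_antisymm (Finset.min_le ha) (Finset.le_min fun b hb => ?_)
    have := Finset.min_le (Finset.mem_map_of_mem Fin.castSuccEmb hb)
    rw [h] at this
    have h2 : Fin.castSucc a ≤ Fin.castSucc b := by exact_mod_cast this
    exact_mod_cast (Fin.castSucc_le_castSucc_iff.1 h2)
  · intro h
    refine le_antisymm (Finset.min_le (Finset.mem_map_of_mem _ (Finset.mem_of_min h)))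
      (Finset.le_min fun b hb => ?_)
    obtain ⟨a, ha, rfl⟩ := Finset.mem_map.1 hb
    have := Finset.min_le ha
    rw [h] at this
    have h2 : ρ ≤ a := by exact_mod_cast this
    exact_mod_cast (Fin.castSucc_le_castSucc_iff.2 h2)

lemma min_insert_last {k : ℕ} (I : Finset (Fin k)) (ρ : Fin k) :
    (insert (Fin.last k) (I.map Fin.castSuccEmb)).min = (Fin.castSucc ρ : WithTop (Fin (k + 1))) ↔
      I.min = (ρ : WithTop (Fin k)) := by
  rw [← min_map_castSucc I ρ, Finset.min_insert]
  have hlt : (Fin.castSucc ρ : WithTop (Fin (k + 1))) < (Fin.last k : WithTop (Fin (k + 1))) := by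
    exact_mod_cast Fin.castSucc_lt_last ρ
  rw [min_eq_iff]
  constructor
  · rintro (⟨h, -⟩ | ⟨h, -⟩)
    · exact absurd h hlt.ne'
    · exact h
  · intro h
    exact Or.inr ⟨h, h ▸ hlt.le⟩

/-- Sets of rows with minimum `ρ` below the last row, split by whether they contain the last row. -/
lemma sum_finset_castSucc {k : ℕ} (ρ : Fin k) (F : Finset (Fin (k + 1)) → ℝ) :
    ∑ I ∈ Finset.univ.filter (fun I : Finset (Fin (k + 1)) =>
        I.min = (Fin.castSucc ρ : WithTop (Fin (k + 1)))), F I =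
      ∑ I ∈ Finset.univ.filter (fun I : Finset (Fin k) => I.min = (ρ : WithTop (Fin k))),
        (F (I.map Fin.castSuccEmb) + F (insert (Fin.last k) (I.map Fin.castSuccEmb))) := by
  have hlast : ∀ I : Finset (Fin k), Fin.last k ∉ I.map Fin.castSuccEmb := by
    intro I
    simp [Fin.castSucc_ne_last]
  have hsurj : ∀ I : Finset (Fin (k + 1)), Fin.last k ∉ I →
      ∃ I0 : Finset (Fin k), I0.map Fin.castSuccEmb = I := by
    intro I hI
    refine ⟨Finset.univ.filter fun a => Fin.castSucc a ∈ I, ?_⟩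
    ext a
    induction a using Fin.lastCases with
    | last => simp [hI, Fin.castSucc_ne_last]
    | cast a => simp
  rw [Finset.sum_add_distrib, ← Finset.sum_filter_add_sum_filter_not _
    (fun I : Finset (Fin (k + 1)) => Fin.last k ∉ I)]
  congr 1
  · symm
    refine Finset.sum_bij (fun I _ => I.map Fin.castSuccEmb) ?_ ?_ ?_ fun _ _ => rfl
    · intro I hI
      simp only [Finset.mem_filter, Finset.mem_univ, true_and] at hI ⊢
      exact ⟨(min_map_castSucc I ρ).2 hI, hlast I⟩
    · intro I _ I' _ h
      exact Finset.map_injective _ h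
    · intro I hI
      simp only [Finset.mem_filter, Finset.mem_univ, true_and] at hI
      obtain ⟨I0, rfl⟩ := hsurj I hI.2
      exact ⟨I0, by simpa using (min_map_castSucc I0 ρ).1 hI.1, rfl⟩
  · symm
    refine Finset.sum_bij (fun I _ => insert (Fin.last k) (I.map Fin.castSuccEmb)) ?_ ?_ ?_
      fun _ _ => rfl
    · intro I hI
      simp only [Finset.mem_filter, Finset.mem_univ, true_and] at hI ⊢
      exact ⟨(min_insert_last I ρ).2 hI, by simp⟩
    · intro I _ I' _ h
      have h2 := congrArg (fun s => s.erase (Fin.last k)) h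
      simp only [Finset.erase_insert (hlast _)] at h2
      exact Finset.map_injective _ h2
    · intro I hI
      simp only [Finset.mem_filter, Finset.mem_univ, true_and, not_not] at hI
      obtain ⟨I0, h0⟩ := hsurj (I.erase (Fin.last k)) (Finset.notMem_erase _ _)
      have h1 : insert (Fin.last k) (I0.map Fin.castSuccEmb) = I := by
        rw [h0, Finset.insert_erase hI.2]
      refine ⟨I0, ?_, h1⟩
      simp only [Finset.mem_filter, Finset.mem_univ, true_and]
      rw [← min_insert_last, h1]
      exact hI.1

/-- Sets of columns with minimum `j`, classified by their second smallest element `l`. -/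
lemma sum_finset_insert_min {n p : ℕ} (hp : 0 < p) (j : Fin n) (F : Finset (Fin n) → ℝ) :
    ∑ J ∈ Finset.univ.filter (fun J : Finset (Fin n) =>
        J.min = (j : WithTop (Fin n)) ∧ J.card = p + 1), F J =
      ∑ l ∈ Finset.univ.filter (fun l : Fin n => j < l),
        ∑ J ∈ Finset.univ.filter (fun J : Finset (Fin n) =>
          J.min = (l : WithTop (Fin n)) ∧ J.card = p), F (insert j J) := by
  have hnot : ∀ (J : Finset (Fin n)) (l : Fin n), J.min = (l : WithTop (Fin n)) → j < l →
      j ∉ J := by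
    intro J l h hjl hj
    have := Finset.min_le hj
    rw [h] at this
    exact absurd hjl (not_lt.2 (by exact_mod_cast this))
  rw [Finset.sum_sigma']
  symm
  refine Finset.sum_bij (fun x _ => insert j x.2) ?_ ?_ ?_ fun _ _ => rfl
  · rintro ⟨l, J⟩ h
    simp only [Finset.mem_sigma, Finset.mem_filter, Finset.mem_univ, true_and] at h ⊢
    obtain ⟨hjl, hl, hc⟩ := h
    rw [Finset.card_insert_of_notMem (hnot J l hl hjl), hc, Finset.min_insert, hl]
    exact ⟨min_eq_left (by exact_mod_cast hjl.le), rfl⟩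
  · rintro ⟨l, J⟩ h ⟨l', J'⟩ h' he
    simp only [Finset.mem_sigma, Finset.mem_filter, Finset.mem_univ, true_and] at h h' he
    have h2 := congrArg (fun s => s.erase j) he
    simp only [Finset.erase_insert (hnot J l h.2.1 h.1),
      Finset.erase_insert (hnot J' l' h'.2.1 h'.1)] at h2
    subst h2
    have h3 : l = l' := by
      have := h.2.1.symm.trans h'.2.1
      exact_mod_cast this
    subst h3
    rfl
  · intro J hJ
    simp only [Finset.mem_filter, Finset.mem_univ, true_and] at hJ
    have hjJ := Finset.mem_of_min hJ.1
    have hc : (J.erase j).card = p := by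
      rw [Finset.card_erase_of_mem hjJ, hJ.2]
      rfl
    have hne : (J.erase j).Nonempty := Finset.card_pos.1 (by omega)
    refine ⟨⟨(J.erase j).min' hne, J.erase j⟩, ?_, Finset.insert_erase hjJ⟩
    simp only [Finset.mem_sigma, Finset.mem_filter, Finset.mem_univ, true_and]
    refine ⟨?_, (Finset.coe_min' hne).symm, hc⟩
    have hm := Finset.min'_mem _ hne
    have h1 := Finset.min_le (Finset.mem_of_mem_erase hm)
    rw [hJ.1] at h1
    exact lt_of_le_of_ne (by exact_mod_cast h1) (Finset.ne_of_mem_erase hm).symm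

/-- The path sums of `T` are those of `T` without its last row, multiplied by the
triangular matrix with entries `t_{last, j} / t_{last, l}`. -/
lemma XGamma_castSucc {k n : ℕ} (T : Matrix (Fin (k + 1)) (Fin n) ℝ)
    (hT : ∀ b, T (Fin.last k) b ≠ 0) (ρ : Fin k) (j : Fin n) :
    XGamma T (Fin.castSucc ρ) j =
      ∑ l ∈ Finset.univ.filter (fun l : Fin n => j ≤ l),
        XGamma (Matrix.of fun (a : Fin k) b => T (Fin.castSucc a) b) ρ l *
          (T (Fin.last k) j / T (Fin.last k) l) := by
  have hsplit : Finset.univ.filter (fun l : Fin n => j ≤ l) =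
      insert j (Finset.univ.filter (fun l : Fin n => j < l)) := by
    ext l
    simp [le_iff_lt_or_eq, or_comm, eq_comm]
  rw [hsplit, Finset.sum_insert (by simp), div_self (hT j), mul_one]
  simp only [XGamma, Matrix.of_apply]
  rw [sum_finset_castSucc, Finset.sum_add_distrib]
  congr 1
  · refine Finset.sum_congr rfl fun I _ => ?_
    rw [Finset.card_map]
    exact Finset.sum_congr rfl fun J _ => gammaWeight_castSucc T I J
  · simp_rw [Finset.sum_mul]
    rw [Finset.sum_comm]
    refine Finset.sum_congr rfl fun I hI => ?_
    simp only [Finset.mem_filter, Finset.mem_univ, true_and] at hI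
    have hne : I.Nonempty := ⟨ρ, Finset.mem_of_min hI⟩
    rw [Finset.card_insert_of_notMem (by simp [Fin.castSucc_ne_last]), Finset.card_map,
      sum_finset_insert_min hne.card_pos]
    refine Finset.sum_congr rfl fun l hl => Finset.sum_congr rfl fun J hJ => ?_
    simp only [Finset.mem_filter, Finset.mem_univ, true_and] at hl hJ
    exact gammaWeight_extend T hne hJ.2.symm hJ.1 hl

/-! ### Factorization of path sums -/

lemma zeroExt_of_lt {M N : ℕ} (A : Matrix (Fin M) (Fin N) ℝ) {a b : ℕ} (ha : a < M) (hb : b < N) :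
    zeroExt A a b = A ⟨a, ha⟩ ⟨b, hb⟩ := dif_pos ⟨ha, hb⟩

lemma sum_filter_le {n : ℕ} (j : Fin n) {F : Fin n → ℝ} {G : ℕ → ℝ}
    (h : ∀ l, j ≤ l → F l = G l) :
    ∑ l ∈ Finset.univ.filter (fun l : Fin n => j ≤ l), F l = ∑ l ∈ Ico (j : ℕ) n, G l := by
  refine Finset.sum_bij (fun l _ => (l : ℕ)) ?_ ?_ ?_ ?_
  · intro l hl
    have h2 : j ≤ l := by simpa using hl
    exact Finset.mem_Ico.2 ⟨h2, l.isLt⟩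
  · intro a _ b _ hab
    exact Fin.ext hab
  · intro l hl
    rw [Finset.mem_Ico] at hl
    exact ⟨⟨l, hl.2⟩, Finset.mem_filter.2 ⟨Finset.mem_univ _, hl.1⟩, rfl⟩
  · intro l hl
    exact h l (Finset.mem_filter.1 hl).2

/-- The matrix formed by the first `a` rows of `T`. -/
def topRows {m n : ℕ} (T : Matrix (Fin m) (Fin n) ℝ) (a : ℕ) (ha : a ≤ m) :
    Matrix (Fin a) (Fin n) ℝ :=
  Matrix.of fun s b => T ⟨(s : ℕ), lt_of_lt_of_le s.isLt ha⟩ b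

lemma XGamma_topRows_last {m n : ℕ} (T : Matrix (Fin m) (Fin n) ℝ) {a j : ℕ} (ha : a + 1 ≤ m)
    (hj : j < n) : zeroExt (XGamma (topRows T (a + 1) ha)) a j = zeroExt T a j := by
  rw [zeroExt_of_lt _ (Nat.lt_succ_self a) hj, zeroExt_of_lt _ ha hj]
  exact XGamma_last (topRows T (a + 1) ha) ⟨j, hj⟩

lemma XGamma_topRows_succ {m n : ℕ} {T : Matrix (Fin m) (Fin n) ℝ} (hT : EntrywisePos T)
    {a ρ j : ℕ} (ha : a + 1 ≤ m) (hρ : ρ < a) (hj : j < n) :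
    zeroExt (XGamma (topRows T (a + 1) ha)) ρ j =
      ∑ l ∈ Ico j n, zeroExt (XGamma (topRows T a (Nat.le_of_succ_le ha))) ρ l *
        (zeroExt T a j / zeroExt T a l) := by
  rw [zeroExt_of_lt _ (by omega) hj]
  refine (XGamma_castSucc (topRows T (a + 1) ha) (fun b => (hT _ b).ne') ⟨ρ, hρ⟩ ⟨j, hj⟩).trans
    (sum_filter_le ⟨j, hj⟩ fun l _ => ?_)
  rw [zeroExt_of_lt _ hρ l.isLt, zeroExt_of_lt _ ha hj, zeroExt_of_lt _ ha l.isLt]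
  rfl

lemma coef_one (B : ℕ → ℕ → ℝ) (n j l : ℕ) : coef B 1 n j l = B 0 j / B 0 l := by
  have h : min (1 - 1) (n - 1 - l) = 0 := by omega
  rw [coef, h]
  simp [topMinor]

/-- Rows above row `a` of `X_Γ(T)` are obtained from `X_Γ` of the first `a` rows of `T` by the
triangular system of the rows `a, a + 1, …` of `X_Γ(T)`. Downward induction on `a`: by `coef_step`,
the one-row triangular matrix of `XGamma_topRows_succ` turns the system of the rows from `a + 1`
on into the system of the rows from `a` on. -/
lemma XGamma_factor {m n : ℕ} {T : Matrix (Fin m) (Fin n) ℝ} (hT : EntrywisePos T)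
    (hX : MinorsPos (zeroExt (XGamma T)) m n) (d : ℕ) :
    ∀ (a : ℕ) (ha : a + (d + 1) = m), ∀ ρ < a, ∀ j < n,
      zeroExt (XGamma T) ρ j =
        ∑ l ∈ Ico j n, coef (fun s b => zeroExt (XGamma T) (a + s) b) (d + 1) n j l *
          zeroExt (XGamma (topRows T a (by omega))) ρ l := by
  induction d with
  | zero =>
    intro a ha ρ hρ j hj
    subst ha
    refine (XGamma_topRows_succ hT le_rfl hρ hj).trans (Finset.sum_congr rfl fun l hl => ?_)
    rw [Finset.mem_Ico] at hl
    have e : ∀ b < n, zeroExt (XGamma T) a b = zeroExt T a b :=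
      fun b hb => XGamma_topRows_last T le_rfl hb
    have h1 := coef_one (fun s b => zeroExt (XGamma T) (a + s) b) n j l
    rw [add_zero, e j hj, e l hl.2] at h1
    rw [← h1, mul_comm]
  | succ d ih =>
    intro a ha ρ hρ j hj
    have ih' := ih (a + 1) (by omega)
    have hA : ContigPos (fun s b => zeroExt (XGamma T) (a + s) b) (d + 1 + 1) n :=
      hX.contigPos_add (by omega)
    have hB : (fun s b => zeroExt (XGamma T) (a + 1 + s) b) =
        fun s b => zeroExt (XGamma T) (a + (s + 1)) b := by
      ext s b
      rw [add_assoc, add_comm 1 s]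
    have hrow : ∀ j < n, zeroExt (XGamma T) (a + 0) j =
        ∑ l ∈ Ico j n, coef (fun s b => zeroExt (XGamma T) (a + (s + 1)) b) (d + 1) n j l *
          zeroExt T a l := by
      intro j hj
      rw [add_zero, ih' a (by omega) j hj, hB]
      refine Finset.sum_congr rfl fun l hl => ?_
      rw [XGamma_topRows_last T (by omega) (Finset.mem_Ico.1 hl).2]
    rw [ih' ρ (by omega) j hj, hB]
    have hstep : ∀ i ∈ Ico j n, coef (fun s b => zeroExt (XGamma T) (a + s) b) (d + 1 + 1) n j i *
        zeroExt (XGamma (topRows T a (by omega))) ρ i =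
        ∑ l ∈ Ico j (i + 1),
          coef (fun s b => zeroExt (XGamma T) (a + (s + 1)) b) (d + 1) n j l *
          (zeroExt (XGamma (topRows T a (by omega))) ρ i * (zeroExt T a l / zeroExt T a i)) := by
      intro i hi
      rw [Finset.mem_Ico] at hi
      have h0 : zeroExt T a i ≠ 0 := by
        rw [zeroExt_of_lt _ (by omega) hi.2]
        exact (hT _ _).ne'
      have := coef_step hA (by omega) hrow hi.2 hi.1
      rw [← mul_div_cancel_right₀ (coef _ _ _ _ _) h0, ← this, Finset.sum_div, Finset.sum_mul]
      exact Finset.sum_congr rfl fun l _ => by ring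
    rw [Finset.sum_congr rfl hstep, Finset.sum_comm' (t' := Ico j n) (s' := fun l => Ico l n)]
    · refine Finset.sum_congr rfl fun l hl => ?_
      rw [XGamma_topRows_succ hT (by omega) hρ (Finset.mem_Ico.1 hl).2, Finset.mul_sum]
    · intro x y
      simp only [Finset.mem_Ico]
      omega

/-! ### Translation to bordered minors -/

lemma zeroExt_val {M N : ℕ} (A : Matrix (Fin M) (Fin N) ℝ) {a b : ℕ} {x : Fin M} {y : Fin N}
    (hx : (x : ℕ) = a) (hy : (y : ℕ) = b) : zeroExt A a b = A x y := by
  subst hx hy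
  exact zeroExt_of_lt A x.isLt y.isLt

lemma topMinor_zero (B : ℕ → ℕ → ℝ) (j l : ℕ) : topMinor B 0 j l = B 0 j := by
  simp [topMinor]

lemma borderMinorTL_eq_s16 {m n : ℕ} (X : Matrix (Fin m) (Fin n) ℝ) {k j l : ℕ} (hk : k < m)
    (hj : j ≤ l) (hl : l < n) :
    borderMinorTL X (k + 1) (j + 1) (k + 2) (l + 2) =
      topMinor (fun a b => zeroExt X (k + a) b) (min (m - k - 1) (n - 1 - l)) j l := by
  rw [borderMinorTL, dif_pos (by omega)]
  by_cases h : k + 2 ≤ m ∧ l + 2 ≤ n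
  · rw [dif_pos (by omega),
      show min (m - k - 1) (n - 1 - l) = min (m - (k + 2)) (n - (l + 2)) + 1 by omega, topMinor]
    congr 1
    ext s t
    rw [Matrix.submatrix_apply, Matrix.of_apply]
    refine (zeroExt_val X ?_ ?_).symm
    · split_ifs with h0
      · simp [h0]
      · dsimp only
        omega
    · split_ifs with h0
      · simp [h0]
      · rw [borderCol_of_ne _ _ h0]
        dsimp only
        omega
  · rw [dif_neg (by omega), show min (m - k - 1) (n - 1 - l) = 0 by omega, topMinor_zero]
    exact (zeroExt_val X (by simp) (by simp)).symm

/-- Reversing rows and columns turns bottom-right bordered minors into top-left ones. The row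
`k` (1-based) becomes row `0`, and column `b` becomes column `n - 1 - b`. -/
lemma borderMinorBR_eq {K n : ℕ} (A : Matrix (Fin K) (Fin n) ℝ) {k i j : ℕ} (hk : 1 ≤ k)
    (hkK : k ≤ K) (hi : i ≤ j) (hj : j < n) :
    borderMinorBR A (k - 1) i k (j + 1) =
      topMinor (fun a b => zeroExt A (k - 1 - a) (n - 1 - b))
        (min (k - 1) (n - 1 - (n - 1 - i))) (n - 1 - j) (n - 1 - i) := by
  rw [borderMinorBR, dif_pos (by omega)]
  by_cases h : 2 ≤ k ∧ 1 ≤ i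
  · rw [dif_pos (by omega),
      show min (k - 1) (n - 1 - (n - 1 - i)) = min (k - 1 - 1) (i - 1) + 1 by omega, topMinor,
      ← Matrix.det_submatrix_equiv_self Fin.revPerm]
    congr 1
    ext s t
    have hs := s.isLt
    have ht := t.isLt
    simp only [Matrix.submatrix_apply, Matrix.of_apply, Fin.revPerm_apply, Fin.val_rev]
    have hc : ∀ u : ℕ, (u = 0 ∧ borderCol (n - 1 - j) (n - 1 - i) u = n - 1 - j) ∨
        (u ≠ 0 ∧ borderCol (n - 1 - j) (n - 1 - i) u = n - 1 - i + u) := by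
      intro u
      rcases eq_or_ne u 0 with h0 | h0
      · exact Or.inl ⟨h0, by rw [h0, borderCol_zero]⟩
      · exact Or.inr ⟨h0, borderCol_of_ne _ _ h0⟩
    have ht2 := hc t
    refine (zeroExt_val A ?_ ?_).symm
    · split_ifs with h0 <;> dsimp only <;> omega
    · split_ifs with h0 <;> dsimp only <;> omega
  · rw [dif_neg (by omega), show min (k - 1) (n - 1 - (n - 1 - i)) = 0 by omega, topMinor_zero]
    refine (zeroExt_val A ?_ ?_).symm <;> dsimp only <;> omega

lemma sum_filter_ge {n : ℕ} (j : Fin n) {F : Fin n → ℝ} {G : ℕ → ℝ}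
    (h : ∀ i, i ≤ j → F i = G (n - 1 - i)) :
    ∑ i ∈ Finset.univ.filter (fun i : Fin n => i ≤ j), F i =
      ∑ l ∈ Ico (n - 1 - (j : ℕ)) n, G l := by
  have hj := j.isLt
  refine Finset.sum_bij (fun i _ => n - 1 - (i : ℕ)) ?_ ?_ ?_ ?_
  · intro i hi
    have h2 : (i : ℕ) ≤ j := (Finset.mem_filter.1 hi).2
    rw [Finset.mem_Ico]
    omega
  · intro a _ b _ hab
    have := a.isLt
    have := b.isLt
    exact Fin.ext (by omega)
  · intro l hl
    rw [Finset.mem_Ico] at hl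
    refine ⟨⟨n - 1 - l, by omega⟩, Finset.mem_filter.2 ⟨Finset.mem_univ _, ?_⟩, ?_⟩
    · rw [Fin.le_def]
      dsimp only
      omega
    · dsimp only
      omega
  · intro i hi
    exact h i (Finset.mem_filter.1 hi).2

lemma sum_borderMinorTL {m n : ℕ} (X : Matrix (Fin m) (Fin n) ℝ) {k : ℕ} (hk : k < m) (r : ℕ → ℝ)
    (j : Fin n) :
    ∑ l ∈ Finset.univ.filter (fun l : Fin n => j ≤ l),
        borderMinorTL X (k + 1) ((j : ℕ) + 1) (k + 2) ((l : ℕ) + 2) /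
          borderMinorTL X (k + 1) ((l : ℕ) + 1) (k + 2) ((l : ℕ) + 2) * r l =
      ∑ l ∈ Ico (j : ℕ) n, coef (fun a b => zeroExt X (k + a) b) (m - k) n j l * r l := by
  refine sum_filter_le j fun l hl => ?_
  rw [borderMinorTL_eq_s16 X hk hl l.isLt, borderMinorTL_eq_s16 X hk le_rfl l.isLt, coef]

lemma sum_borderMinorBR {K n : ℕ} (A : Matrix (Fin K) (Fin n) ℝ) {k : ℕ} (hk : 1 ≤ k)
    (hkK : k ≤ K) (y : ℕ → ℝ) (j : Fin n) :
    ∑ i ∈ Finset.univ.filter (fun i : Fin n => i ≤ j),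
        borderMinorBR A (k - 1) (i : ℕ) k ((j : ℕ) + 1) /
          borderMinorBR A (k - 1) (i : ℕ) k ((i : ℕ) + 1) * y (n - 1 - i) =
      ∑ l ∈ Ico (n - 1 - (j : ℕ)) n,
        coef (fun a b => zeroExt A (k - 1 - a) (n - 1 - b)) k n (n - 1 - j) l * y l := by
  refine sum_filter_ge j fun i hi => ?_
  rw [borderMinorBR_eq A hk hkK hi j.isLt, borderMinorBR_eq A hk hkK le_rfl i.isLt, coef]

lemma topMinor_congr {B C : ℕ → ℕ → ℝ} {q : ℕ} (h : ∀ a ≤ q, ∀ b, B a b = C a b) (j l : ℕ) :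
    topMinor B q j l = topMinor C q j l := by
  unfold topMinor
  congr 1
  ext s t
  exact h _ (Nat.lt_succ_iff.1 s.isLt) _

lemma coef_congr {B C : ℕ → ℕ → ℝ} {M : ℕ} (hM : 1 ≤ M) (h : ∀ a < M, ∀ b, B a b = C a b)
    (n j l : ℕ) : coef B M n j l = coef C M n j l := by
  have h' : ∀ a ≤ min (M - 1) (n - 1 - l), ∀ b, B a b = C a b := fun a ha b => h a (by omega) b
  rw [coef, coef, topMinor_congr h', topMinor_congr h']

/-- If row `k` extends the rows `0, …, k - 1` of `A` to a matrix with positive contiguous minors,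
then its coordinates in the system of bottom-right bordered minors of `A` are positive: this is
`exists_pos_solution` for the reversed matrix. -/
lemma exists_pos_sum_borderMinorBR {K n : ℕ} (A : Matrix (Fin K) (Fin n) ℝ) {k : ℕ} (hk : 1 ≤ k)
    (hkK : k ≤ K) {Z : ℕ → ℕ → ℝ} (hZ : ContigPos Z (k + 1) n)
    (hZA : ∀ a < k, ∀ b, Z a b = zeroExt A a b) :
    ∃ y : Fin n → ℝ, (∀ i, 0 < y i) ∧ ∀ j : Fin n,
      Z k j = ∑ i ∈ Finset.univ.filter (fun i : Fin n => i ≤ j),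
        borderMinorBR A (k - 1) (i : ℕ) k ((j : ℕ) + 1) /
          borderMinorBR A (k - 1) (i : ℕ) k ((i : ℕ) + 1) * y i := by
  obtain ⟨y, hy, hsum⟩ := exists_pos_solution hZ.rev hk
  refine ⟨fun i => y (n - 1 - i), fun i => hy _ (by have := i.isLt; omega), fun j => ?_⟩
  have hj := j.isLt
  have := hsum (n - 1 - j) (by omega)
  rw [Nat.sub_zero, show n - 1 - (n - 1 - (j : ℕ)) = j by omega] at this
  rw [sum_borderMinorBR A hk hkK, this]
  refine Finset.sum_congr rfl fun l _ => ?_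
  rw [coef_congr hk fun a ha b => ?_]
  rw [hZA _ (by omega), show k - (a + 1) = k - 1 - a by omega]

/-- necessity of the linear system for row insertion.  Any TP insertion of
a new row between rows `k` and `k+1` of the TP matrix `X` comes from strongly positive
vectors `r`, `q`, `s` satisfying equations (A) and (B), and the inserted row is given by
the common value in (A). -/
theorem row_insertion_necessary {m n : ℕ} (X : Matrix (Fin m) (Fin n) ℝ)
    (hX : TotallyPositive X) (k : ℕ) (hk1 : 1 ≤ k) (hk2 : k ≤ m - 1)
    (T : Matrix (Fin m) (Fin n) ℝ) (hTpos : EntrywisePos T) (hTX : XGamma T = X)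
    (Xhat : Matrix (Fin k) (Fin n) ℝ)
    (hXhat : Xhat = XGamma (Matrix.of fun (a : Fin k) (b : Fin n) =>
      T ⟨(a : ℕ), by have := a.isLt; omega⟩ b))
    (X' : Matrix (Fin (m + 1)) (Fin n) ℝ) (hX' : TotallyPositive X')
    (hrows1 : ∀ (a : Fin (m + 1)) (j : Fin n) (ha : (a : ℕ) < k),
      X' a j = X ⟨(a : ℕ), by have := a.isLt; omega⟩ j)
    (hrows2 : ∀ (a : Fin (m + 1)) (j : Fin n) (ha : k < (a : ℕ)),
      X' a j = X ⟨(a : ℕ) - 1, by have := a.isLt; omega⟩ j) :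
    ∃ r q s : Fin n → ℝ,
      (∀ b, 0 < r b) ∧ (∀ b, 0 < q b) ∧ (∀ b, 0 < s b) ∧
      ∀ j : Fin n,
        ((∑ l ∈ Finset.univ.filter (fun l : Fin n => j ≤ l),
            borderMinorTL X (k + 1) ((j : ℕ) + 1) (k + 2) ((l : ℕ) + 2) /
                borderMinorTL X (k + 1) ((l : ℕ) + 1) (k + 2) ((l : ℕ) + 2) * r l)
          = ∑ i ∈ Finset.univ.filter (fun i : Fin n => i ≤ j),
              borderMinorBR X (k - 1) (i : ℕ) k ((j : ℕ) + 1) /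
                  borderMinorBR X (k - 1) (i : ℕ) k ((i : ℕ) + 1) * q i) ∧
        (r j = ∑ i ∈ Finset.univ.filter (fun i : Fin n => i ≤ j),
            borderMinorBR Xhat (k - 1) (i : ℕ) k ((j : ℕ) + 1) /
                borderMinorBR Xhat (k - 1) (i : ℕ) k ((i : ℕ) + 1) * s i) ∧
        X' ⟨k, by omega⟩ j =
          ∑ l ∈ Finset.univ.filter (fun l : Fin n => j ≤ l),
            borderMinorTL X (k + 1) ((j : ℕ) + 1) (k + 2) ((l : ℕ) + 2) /
                borderMinorTL X (k + 1) ((l : ℕ) + 1) (k + 2) ((l : ℕ) + 2) * r l := by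
  have hm : k < m := by omega
  have hP : MinorsPos (zeroExt X') (m + 1) n := hX'.minorsPos
  have htop : ∀ a < k, ∀ b, zeroExt X' a b = zeroExt X a b := by
    intro a ha b
    by_cases hb : b < n
    · rw [zeroExt_of_lt _ (by omega) hb, zeroExt_of_lt _ (by omega) hb]
      exact hrows1 _ _ ha
    · rw [zeroExt, zeroExt, dif_neg (by omega), dif_neg (by omega)]
  have hbot : ∀ a b, zeroExt X' (k + (a + 1)) b = zeroExt X (k + a) b := by
    intro a b
    by_cases h : k + a < m ∧ b < n
    · rw [zeroExt_of_lt _ (by omega) h.2, zeroExt_of_lt _ h.1 h.2]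
      exact hrows2 ⟨k + (a + 1), by omega⟩ ⟨b, h.2⟩ (by dsimp only; omega)
    · rw [zeroExt, zeroExt, dif_neg (by omega), dif_neg h]
  have hrow : ∀ j : Fin n, X' ⟨k, by omega⟩ j = zeroExt X' k j :=
    fun j => (zeroExt_of_lt X' (by omega) j.isLt).symm
  obtain ⟨r, hr, hrX⟩ := exists_pos_solution (A := fun a b => zeroExt X' (k + a) b) (M := m - k)
    (n := n) (hP.contigPos_add (by omega)) (by omega)
  simp only [hbot, add_zero] at hrX
  obtain ⟨q, hq, hqX⟩ := exists_pos_sum_borderMinorBR (n := n) X (k := k) hk1 (by omega)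
    (Z := zeroExt X') (by simpa using hP.contigPos_add (c := 0) (K := k + 1) (by omega)) htop
  have hfac := XGamma_factor hTpos (hTX ▸ hX.minorsPos) (m - k - 1) k (by omega)
  simp only [hTX, show m - k - 1 + 1 = m - k by omega] at hfac
  -- `Z` is `Xhat` with `r` as an additional last row.
  have hZpos : ContigPos (fun a b => if a < k then zeroExt Xhat a b else r b) (k + 1) n := by
    refine contigPos_of_coef (A := zeroExt X') (M := m - k)
      (by rwa [show k + 1 + (m - k) = m + 1 by omega]) (by omega) fun a ha j hj => ?_
    have e : (fun a b => zeroExt X' (k + 1 + a) b) = fun a b => zeroExt X (k + a) b := by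
      ext a b
      rw [← hbot, add_assoc, add_comm 1 a]
    rw [e]
    by_cases hak : a < k
    · simp only [if_pos hak]
      rw [htop a hak, hfac a hak j hj, hXhat]
      rfl
    · simp only [if_neg hak]
      rw [show a = k by omega]
      exact hrX j hj
  obtain ⟨s, hs, hsX⟩ := exists_pos_sum_borderMinorBR (n := n) Xhat (k := k) hk1 le_rfl hZpos
    fun a ha b => if_pos ha
  refine ⟨fun l => r l, q, s, fun b => hr b b.isLt, hq, hs, fun j => ?_⟩
  rw [sum_borderMinorTL X hm r j, ← hrX j j.isLt, ← hqX j, hrow]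
  exact ⟨rfl, by simpa using hsX j, rfl⟩
end
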